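/- Let a be a ribbon and let f be any extension of a. Then the set of connected components of the critical set of f in the open unit disk has cardinality at least γ(a). -/

import Mathlib

open scoped RealInnerProductSpace

noncomputable section

abbrev E2 : Type := EuclideanSpace ℝ (Fin 2)

/-- The point (cos t, sin t) on the unit circle in ℝ². -/
def sphPt (t : ℝ) : E2 := (EuclideanSpace.equiv (Fin 2) ℝ).symm ![Real.cos t, Real.sin t]

/-- A ribbon with `n` nodes, encoded via the angle parametrization `g = φ ∘ (cos, sin)`
of a C^∞ function `φ : S¹ → ℝ` whose critical points on the circle are exactly the `n`
nondegenerate local extrema (nodes) at angles `θ 0 < θ 1 < ⋯ < θ (n-1)` in `[0, 2π)`,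
with pairwise distinct critical values, together with a marking `ν` of the nodes by `±1`. -/
structure Ribbon (n : ℕ) : Type where
  g : ℝ → ℝ
  θ : Fin n → ℝ
  ν : Fin n → ℤ
  n_even : Even n
  n_pos : 0 < n
  smooth_g : ContDiff ℝ (⊤ : ℕ∞) g
  periodic_g : Function.Periodic g (2 * Real.pi)
  theta_mem : ∀ i, θ i ∈ Set.Ico (0 : ℝ) (2 * Real.pi)
  theta_mono : StrictMono θ
  node_crit : ∀ i, deriv g (θ i) = 0
  node_nondeg : ∀ i, deriv (deriv g) (θ i) ≠ 0
  crit_only : ∀ t ∈ Set.Ico (0 : ℝ) (2 * Real.pi), deriv g t = 0 → ∃ i, t = θ i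
  values_distinct : ∀ i j, g (θ i) = g (θ j) → i = j
  nu_sign : ∀ i, ν i = 1 ∨ ν i = -1

/-- The signature σ = s₊ − s₋ of a ribbon. -/
def Ribbon.sigma {n : ℕ} (a : Ribbon n) : ℤ := ∑ i, a.ν i

/-- Critical points of `f` in the open unit disk. -/
def critPts (f : E2 → ℝ) : Set E2 :=
  {x | x ∈ Metric.ball (0 : E2) 1 ∧ fderiv ℝ f x = 0}

/-- `f : ℝ² → ℝ` is an extension of the ribbon `a`: it is C^∞, agrees with `φ` on the unit
circle, has nowhere-vanishing gradient on the circle, and at each node the radial derivative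
`⟪∇f(p), p⟫` has sign `ν p` if `p` is a local maximum of `φ` (second derivative of `g`
negative there) and sign `−ν p` if `p` is a local minimum of `φ`. -/
def IsExtension {n : ℕ} (a : Ribbon n) (f : E2 → ℝ) : Prop :=
  ContDiff ℝ (⊤ : ℕ∞) f ∧
  (∀ t : ℝ, f (sphPt t) = a.g t) ∧
  (∀ x ∈ Metric.sphere (0 : E2) 1, fderiv ℝ f x ≠ 0) ∧
  (∀ i : Fin n,
    (deriv (deriv a.g) (a.θ i) < 0 →
      0 < (a.ν i : ℝ) * ⟪gradient f (sphPt (a.θ i)), sphPt (a.θ i)⟫) ∧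
    (0 < deriv (deriv a.g) (a.θ i) →
      (a.ν i : ℝ) * ⟪gradient f (sphPt (a.θ i)), sphPt (a.θ i)⟫ < 0))

/-- The ribbon invariant γ: the infimum, over all extensions `f` of `a`, of the number of
critical points of `f` in the open unit disk (a value in `ℕ∞`). -/
def gammaR {n : ℕ} (a : Ribbon n) : ℕ∞ :=
  sInf {k : ℕ∞ | ∃ f : E2 → ℝ, IsExtension a f ∧ (critPts f).encard = k}

/-!
Morse–Sard: where the derivative of a smooth `f : ℝ² → ℝ` vanishes on a connected set `K`, the
values `f '' K` form an interval of Hausdorff dimension less than one, so `f` is constant on each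
component of its critical set. If there are infinitely many components there is nothing to prove.
Otherwise the components are collapsed to points one after the other, inside the disc and away from
its boundary, so that the boundary conditions persist.

To collapse a component `K` containing `a`, let `W` be the unbounded component of the complement of
`K`. Turning the plane inside out makes `W ∪ {∞}` a simply connected domain, and the Riemann
mapping theorem gives a diffeomorphism of `ℂ ∖ {a}` onto `W`; extending germs of diffeomorphisms of
the plane, one may take it to be the identity near infinity. Pulling `f` back along it gives a
smooth function off `a` that extends continuously by the value of `f` on `K`. Finally the function
is made smooth at `a` without creating critical points other than `a`, by averaging along two
perturbations and composing with a homeomorphism of the line that is flat at the value in question.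
-/

open Set Metric Filter Topology
open scoped NNReal ENNReal ContDiff ComplexConjugate

section MorseSard

variable {E G : Type*} [NormedAddCommGroup E] [NormedSpace ℝ E]
  [NormedAddCommGroup G] [NormedSpace ℝ G]

lemma exists_nhds_dimH_levelSet_add_one_le [FiniteDimensional ℝ E]
    {g : E → ℝ} {g' : E →L[ℝ] ℝ} {x₀ : E} (hg : HasStrictFDerivAt g g' x₀) (hg' : g' ≠ 0) :
    ∃ t ∈ 𝓝 x₀, dimH (t ∩ {x | g x = g x₀}) + 1 ≤ Module.finrank ℝ E := by
  have hrange : g'.range = ⊤ := LinearMap.range_eq_top.2 <|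
    LinearMap.surjective (f := (g' : E →ₗ[ℝ] ℝ)) fun h => hg' (by ext v; exact congr($h v))
  set ψ := hg.implicitFunction g g' hrange (g x₀)
  obtain ⟨C, s, hs, hlip⟩ := (hg.to_implicitFunction hrange).exists_lipschitzOnWith
  set Φ := hg.implicitToOpenPartialHomeomorph g g' hrange
  have hΦ : Tendsto (fun x => (Φ x).2) (𝓝 x₀) (𝓝 0) := by
    have h := (Φ.continuousAt (hg.mem_implicitToOpenPartialHomeomorph_source hrange)).snd
    simpa [ContinuousAt, Φ] using h
  refine ⟨_, (hΦ.eventually hs).and (hg.eq_implicitFunction hrange), ?_⟩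
  have hdim : dimH (univ : Set g'.ker) + 1 = Module.finrank ℝ E := by
    rw [Real.dimH_univ_eq_finrank]
    have := g'.toLinearMap.finrank_range_add_finrank_ker
    rw [hrange] at this
    simp only [finrank_top, Module.finrank_self] at this
    rw [← this, add_comm]
    push_cast
    rfl
  rw [← hdim]
  gcongr
  calc _ ≤ dimH (ψ '' s) := dimH_mono ?_
    _ ≤ dimH s := hlip.dimH_image_le
    _ ≤ dimH univ := dimH_mono (subset_univ s)
  rintro x ⟨⟨hxs, hx⟩, hgx⟩
  exact ⟨_, hxs, by simpa only [ψ, ← show g x = g x₀ from hgx] using hx⟩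

lemma norm_sub_le_of_norm_fderiv_le_pow {g : E → G} (hg : Differentiable ℝ g) {u : Set E}
    (hu : Convex ℝ u) {x y : E} (hx : x ∈ u) (hy : y ∈ u) {C : ℝ} (hC : 0 ≤ C) {k : ℕ}
    (h : ∀ z ∈ u, ‖fderiv ℝ g z‖ ≤ C * ‖z - x‖ ^ k) :
    ‖g y - g x‖ ≤ C * ‖y - x‖ ^ (k + 1) := by
  have hseg : ∀ z ∈ segment ℝ x y, ‖fderiv ℝ g z‖ ≤ C * ‖y - x‖ ^ k := fun z hz =>
    (h z (hu.segment_subset hx hy hz)).trans <| by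
      gcongr
      simpa [dist_eq_norm] using (convex_closedBall x (dist y x)).segment_subset
        (mem_closedBall_self dist_nonneg) (mem_closedBall.2 le_rfl) hz
  calc ‖g y - g x‖ ≤ C * ‖y - x‖ ^ k * ‖y - x‖ :=
        (convex_segment x y).norm_image_sub_le_of_norm_fderiv_le (fun z _ => hg z) hseg
          (left_mem_segment ℝ x y) (right_mem_segment ℝ x y)
    _ = C * ‖y - x‖ ^ (k + 1) := by ring

lemma dimH_image_le_of_norm_fderiv_le_pow [SecondCountableTopology E] {f : E → G}
    (hf : Differentiable ℝ f) {s : Set E} (k : ℕ) (h : ∀ x₀ ∈ s, ∃ C : ℝ≥0, ∃ u ∈ 𝓝 x₀,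
      ∀ x ∈ s ∩ u, ∀ z ∈ u, ‖fderiv ℝ f z‖ ≤ C * ‖z - x‖ ^ k) :
    dimH (f '' s) ≤ dimH s / (k + 1 : ℕ) := by
  refine dimH_image_le_of_locally_holder_on (r := (k + 1 : ℕ)) (by positivity) fun x₀ hx₀ => ?_
  obtain ⟨C, u, hu, hCu⟩ := h x₀ hx₀
  obtain ⟨r, hr, hru⟩ := Metric.mem_nhds_iff.1 hu
  refine ⟨C, s ∩ ball x₀ r, inter_mem_nhdsWithin _ (ball_mem_nhds _ hr), fun y hy x hx => ?_⟩
  have hxy := norm_sub_le_of_norm_fderiv_le_pow hf (convex_ball x₀ r) hx.2 hy.2 C.2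
    fun z hz => hCu x ⟨hx.1, hru hx.2⟩ z (hru hz)
  rw [NNReal.coe_natCast, ENNReal.rpow_natCast, edist_nndist, edist_nndist]
  norm_cast
  simpa [← NNReal.coe_le_coe, dist_eq_norm] using hxy

variable [FiniteDimensional ℝ E] {f : E → ℝ}

lemma dimH_image_degenerate_critical_lt_one (hE : Module.finrank ℝ E ≤ 2) (hf : ContDiff ℝ 3 f) :
    dimH (f '' {x | fderiv ℝ f x = 0 ∧ fderiv ℝ (fderiv ℝ f) x = 0}) < 1 := by
  set s := {x | fderiv ℝ f x = 0 ∧ fderiv ℝ (fderiv ℝ f) x = 0}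
  have hf1 : ContDiff ℝ 2 (fderiv ℝ f) := hf.fderiv_right (by norm_num)
  have hf2 : ContDiff ℝ 1 (fderiv ℝ (fderiv ℝ f)) := hf1.fderiv_right (by norm_num)
  have himage : dimH (f '' s) ≤ dimH s / (2 + 1 : ℕ) := by
    refine dimH_image_le_of_norm_fderiv_le_pow (hf.differentiable (by norm_num)) 2 fun x₀ _ => ?_
    obtain ⟨C, u, hu, hlip⟩ := (hf2.contDiffAt (x := x₀)).exists_lipschitzOnWith
    obtain ⟨r, hr, hru⟩ := Metric.mem_nhds_iff.1 hu
    refine ⟨C, ball x₀ r, ball_mem_nhds _ hr, fun x ⟨hxs, hx⟩ z hz => ?_⟩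
    have := norm_sub_le_of_norm_fderiv_le_pow (hf1.differentiable (by norm_num))
      (convex_ball x₀ r) hx hz C.2 (k := 1) fun w hw => by
        simpa [hxs.2] using hlip.norm_sub_le (hru hw) (hru hx)
    simpa [hxs.1] using this
  have hs : dimH s ≤ 2 := calc
    dimH s ≤ dimH univ := dimH_mono (subset_univ s)
    _ = Module.finrank ℝ E := Real.dimH_univ_eq_finrank E
    _ ≤ 2 := by exact_mod_cast hE
  refine himage.trans_lt ((ENNReal.div_lt_iff (by simp) (by simp)).2 (hs.trans_lt ?_))
  norm_num

lemma dimH_nondegenerate_critical_le_one (hE : Module.finrank ℝ E ≤ 2) (hf : ContDiff ℝ 2 f) :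
    dimH {x | fderiv ℝ f x = 0 ∧ fderiv ℝ (fderiv ℝ f) x ≠ 0} ≤ 1 := by
  have hf1 : ContDiff ℝ 1 (fderiv ℝ f) := hf.fderiv_right (by norm_num)
  set s := {x | fderiv ℝ f x = 0 ∧ fderiv ℝ (fderiv ℝ f) x ≠ 0}
  by_contra! hs
  obtain ⟨x, hx, hlocal⟩ := exists_mem_nhdsWithin_lt_dimH_of_lt_dimH hs
  obtain ⟨v, hv⟩ : ∃ v, (fderiv ℝ (fderiv ℝ f) x).flip v ≠ 0 := by
    by_contra! h
    refine hx.2 ?_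
    ext v w
    simpa using congr($(h w) v)
  have hstrict : HasStrictFDerivAt (fun y => fderiv ℝ f y v) ((fderiv ℝ (fderiv ℝ f) x).flip v) x :=
    (ContinuousLinearMap.apply ℝ ℝ v).hasStrictFDerivAt.comp x
      (hf1.contDiffAt.hasStrictFDerivAt one_ne_zero)
  obtain ⟨t, ht, hdim⟩ := exists_nhds_dimH_levelSet_add_one_le hstrict hv
  have hst : s ∩ t ⊆ t ∩ {y | fderiv ℝ f y v = fderiv ℝ f x v} := fun y hy =>
    ⟨hy.2, by simp [hy.1.1, hx.1]⟩
  have hlt : (1 : ℝ≥0∞) + 1 < 2 := calc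
    (1 : ℝ≥0∞) + 1 < dimH (s ∩ t) + 1 := by
      gcongr
      · simp
      · exact hlocal _ (inter_mem_nhdsWithin _ ht)
    _ ≤ Module.finrank ℝ E := (add_le_add_left (dimH_mono hst) 1).trans hdim
    _ ≤ 2 := by exact_mod_cast hE
  norm_num at hlt

lemma dimH_image_nondegenerate_critical_lt_one (hE : Module.finrank ℝ E ≤ 2)
    (hf : ContDiff ℝ 2 f) :
    dimH (f '' {x | fderiv ℝ f x = 0 ∧ fderiv ℝ (fderiv ℝ f) x ≠ 0}) < 1 := by
  set s := {x | fderiv ℝ f x = 0 ∧ fderiv ℝ (fderiv ℝ f) x ≠ 0}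
  have hf1 : ContDiff ℝ 1 (fderiv ℝ f) := hf.fderiv_right (by norm_num)
  have himage : dimH (f '' s) ≤ dimH s / (1 + 1 : ℕ) := by
    refine dimH_image_le_of_norm_fderiv_le_pow (hf.differentiable (by norm_num)) 1 fun x₀ _ => ?_
    obtain ⟨C, u, hu, hlip⟩ := (hf1.contDiffAt (x := x₀)).exists_lipschitzOnWith
    refine ⟨C, u, hu, fun x hx z hz => ?_⟩
    simpa [hx.1.1] using hlip.norm_sub_le hz hx.2
  refine himage.trans_lt ((ENNReal.div_lt_iff (by simp) (by simp)).2
    ((dimH_nondegenerate_critical_le_one hE hf).trans_lt ?_))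
  norm_num

theorem dimH_image_critical_lt_one (hE : Module.finrank ℝ E ≤ 2) (hf : ContDiff ℝ 3 f) :
    dimH (f '' {x | fderiv ℝ f x = 0}) < 1 := by
  have hsplit : {x | fderiv ℝ f x = 0} = {x | fderiv ℝ f x = 0 ∧ fderiv ℝ (fderiv ℝ f) x = 0} ∪
      {x | fderiv ℝ f x = 0 ∧ fderiv ℝ (fderiv ℝ f) x ≠ 0} := by
    ext x; simp only [mem_ofPred_eq, mem_union]; tauto
  rw [hsplit, image_union, dimH_union]
  exact max_lt (dimH_image_degenerate_critical_lt_one hE hf)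
    (dimH_image_nondegenerate_critical_lt_one hE (hf.of_le (by norm_num)))

lemma subsingleton_of_isPreconnected_of_dimH_lt_one {s : Set ℝ} (hs : IsPreconnected s)
    (hdim : dimH s < 1) : s.Subsingleton := by
  by_contra hnot
  obtain ⟨x, hx, y, hy, hxy⟩ := (not_subsingleton_iff.1 hnot).exists_lt
  have hIcc : dimH (Icc x y) = Module.finrank ℝ ℝ :=
    Real.dimH_of_nonempty_interior (by simpa using hxy)
  have := (dimH_mono (hs.Icc_subset hx hy)).trans_lt hdim
  simp [hIcc] at this

theorem eq_of_isPreconnected_of_fderiv_eq_zero (hE : Module.finrank ℝ E ≤ 2)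
    (hf : ContDiff ℝ 3 f) {K : Set E} (hK : IsPreconnected K) (hcrit : ∀ x ∈ K, fderiv ℝ f x = 0)
    {x y : E} (hx : x ∈ K) (hy : y ∈ K) : f x = f y :=
  subsingleton_of_isPreconnected_of_dimH_lt_one (hK.image f hf.continuous.continuousOn)
    ((dimH_mono (image_mono hcrit)).trans_lt (dimH_image_critical_lt_one hE hf))
    (mem_image_of_mem f hx) (mem_image_of_mem f hy)

end MorseSard

section Smoothing

lemma exists_pos_forall_summable_mul {ι : Type*} [Countable ι] {B : ι → ℕ → ℝ}
    (hB : ∀ i j, 0 ≤ B i j) :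
    ∃ b : ℕ → ℝ, (∀ j, 0 < b j) ∧ ∀ i, Summable fun j => b j * B i j := by
  cases isEmpty_or_nonempty ι
  · exact ⟨1, fun _ => one_pos, isEmptyElim⟩
  obtain ⟨e, he⟩ := exists_surjective_nat ι
  set M : ℕ → ℝ := fun j => 1 + ∑ k ∈ Finset.range (j + 1), B (e k) j
  have hM : ∀ j, 0 < M j := fun j =>
    add_pos_of_pos_of_nonneg one_pos (Finset.sum_nonneg fun k _ => hB (e k) j)
  refine ⟨fun j => (1 / 2) ^ j / M j, fun j => div_pos (by positivity) (hM j), fun i => ?_⟩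
  obtain ⟨n, rfl⟩ := he i
  refine summable_geometric_two.of_norm_bounded_eventually_nat ?_
  filter_upwards [eventually_ge_atTop n] with j hj
  have hBM : B (e n) j ≤ M j := by
    have := Finset.single_le_sum (f := fun k => B (e k) j) (fun k _ => hB (e k) j)
      (Finset.mem_range.2 (Nat.lt_succ_of_le hj))
    simp only [M]
    linarith
  rw [Real.norm_of_nonneg (mul_nonneg (div_pos (by positivity) (hM j)).le (hB _ j)),
    div_mul_eq_mul_div, div_le_iff₀ (hM j)]
  gcongr

variable {E : Type*} [NormedAddCommGroup E] [NormedSpace ℝ E]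

/-- The series `∑ j, T j` of real functions converges pointwise to a smooth function and can be
differentiated once term by term. -/
structure IsSmoothSeries (T : ℕ → E → ℝ) : Prop where
  contDiff : ContDiff ℝ ∞ fun x => ∑' j, T j x
  summable : ∀ x, Summable fun j => T j x
  summable_fderiv : ∀ x, Summable fun j => fderiv ℝ (T j) x
  hasFDerivAt : ∀ x, HasFDerivAt (fun x => ∑' j, T j x) (∑' j, fderiv ℝ (T j) x) x

lemma IsSmoothSeries.of_norm_iteratedFDeriv_le {T : ℕ → E → ℝ} (hT : ∀ j, ContDiff ℝ ∞ (T j))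
    {v : ℕ → ℕ → ℝ} (hv : ∀ k, Summable (v k))
    (hTv : ∀ k j x, ‖iteratedFDeriv ℝ k (T j) x‖ ≤ v k j) : IsSmoothSeries T := by
  have hsum : ∀ x, Summable fun j => T j x := fun x =>
    (hv 0).of_norm_bounded fun j => by simpa using hTv 0 j x
  have hfderiv : ∀ j x, ‖fderiv ℝ (T j) x‖ ≤ v 1 j := fun j x =>
    norm_iteratedFDeriv_one (𝕜 := ℝ) (T j) ▸ hTv 1 j x
  exact ⟨contDiff_tsum hT (fun k _ => hv k) fun k j x _ => hTv k j x, hsum,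
    fun x => (hv 1).of_norm_bounded fun j => hfderiv j x,
    hasFDerivAt_tsum (hv 1) (fun j x => ((hT j).differentiable (by simp) x).hasFDerivAt)
      hfderiv (hsum 0)⟩

lemma IsSmoothSeries.of_locally_eq {T : ℕ → E → ℝ}
    (h : ∀ x, ∃ S, IsSmoothSeries S ∧ ∀ᶠ y in 𝓝 x, ∀ j, S j y = T j y) : IsSmoothSeries T := by
  have hsum : ∀ x {S : ℕ → E → ℝ}, (∀ᶠ y in 𝓝 x, ∀ j, S j y = T j y) →
      (fun y => ∑' j, T j y) =ᶠ[𝓝 x] fun y => ∑' j, S j y := fun x S hS => by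
    filter_upwards [hS] with y hy
    simp only [hy]
  have hfderiv : ∀ x {S : ℕ → E → ℝ}, (∀ᶠ y in 𝓝 x, ∀ j, S j y = T j y) →
      ∀ j, fderiv ℝ (S j) x = fderiv ℝ (T j) x := fun x S hS j =>
    EventuallyEq.fderiv_eq (hS.mono fun y hy => hy j)
  refine ⟨contDiff_iff_contDiffAt.2 fun x => ?_, fun x => ?_, fun x => ?_, fun x => ?_⟩ <;>
    obtain ⟨S, hS, heq⟩ := h x
  · exact hS.contDiff.contDiffAt.congr_of_eventuallyEq (hsum x heq)
  · simpa only [heq.self_of_nhds] using hS.summable x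
  · simpa only [hfderiv x heq] using hS.summable_fderiv x
  · simpa only [hfderiv x heq] using (hS.hasFDerivAt x).congr_of_eventuallyEq (hsum x heq)

lemma exists_pos_forall_isSmoothSeries_mul [FiniteDimensional ℝ E] {ι : Type*} [Countable ι]
    {T : ι → ℕ → E → ℝ} (hT : ∀ i j, ContDiff ℝ ∞ (T i j)) :
    ∃ b : ℕ → ℝ, (∀ j, 0 < b j) ∧ ∀ c : ℕ → ℝ, (∀ j, 0 ≤ c j) → (∀ j, c j ≤ b j) →
      ∀ i, IsSmoothSeries fun j x => c j * T i j x := by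
  let χ (R : ℕ) : ContDiffBump (0 : E) := ⟨R + 1, R + 2, by positivity, by linarith⟩
  let S (i : ι) (R j : ℕ) (x : E) : ℝ := χ R x * T i j x
  have hS : ∀ i R j, ContDiff ℝ ∞ (S i R j) := fun i R j => (χ R).contDiff.mul (hT i j)
  have hbound : ∀ (i : ι × ℕ × ℕ) (j : ℕ), ∃ B, ∀ x,
      ‖iteratedFDeriv ℝ i.2.2 (S i.1 i.2.1 j) x‖ ≤ B := fun i j =>
    ((χ i.2.1).hasCompactSupport.mul_right.iteratedFDeriv _).exists_bound_of_continuous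
      ((hS _ _ _).continuous_iteratedFDeriv (by exact_mod_cast le_top))
  choose B hB using hbound
  obtain ⟨b, hb, hsum⟩ := exists_pos_forall_summable_mul
    (fun i j => (norm_nonneg _).trans (hB i j 0))
  refine ⟨b, hb, fun c hc hcb i => .of_locally_eq fun x => ?_⟩
  obtain ⟨R, hR⟩ := exists_nat_gt ‖x‖
  refine ⟨fun j x => c j * S i R j x, .of_norm_iteratedFDeriv_le
    (fun j => contDiff_const.mul (hS i R j)) (fun k => hsum (i, R, k)) fun k j x => ?_, ?_⟩
  · rw [show (fun x => c j * S i R j x) = c j • S i R j from rfl,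
      iteratedFDeriv_const_smul_apply ((hS i R j).of_le (by exact_mod_cast le_top)).contDiffAt,
      norm_smul, Real.norm_of_nonneg (hc j)]
    exact mul_le_mul (hcb j) (hB (i, R, k) j x) (norm_nonneg _) (hb j).le
  · filter_upwards [(χ R).eventuallyEq_one_of_mem_ball (x := x)
      (by simpa [χ] using hR.trans (lt_add_one _))] with y hy j
    simp [S, hy]

section SlopeBound

variable [FiniteDimensional ℝ E] {a : E}

lemma exists_pos_mul_norm_fderiv_contDiffBump_le (f : ContDiffBump a) {U : Set E}
    (hU : closedBall a f.rOut ⊆ U) {m : E → ℝ} (hm : ContinuousOn m (U \ {a}))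
    (hpos : ∀ x ∈ U \ {a}, 0 < m x) :
    ∃ d > 0, ∀ x ∈ U \ {a}, d * ‖fderiv ℝ f x‖ ≤ m x := by
  have hsub : closedBall a f.rOut \ ball a f.rIn ⊆ U \ {a} := fun x hx =>
    ⟨hU hx.1, by rintro rfl; exact hx.2 (mem_ball_self f.rIn_pos)⟩
  have hcompact : IsCompact (closedBall a f.rOut \ ball a f.rIn) :=
    (isCompact_closedBall a f.rOut).diff isOpen_ball
  have hcont : ContinuousOn (fun x => ‖fderiv ℝ f x‖ / m x) (closedBall a f.rOut \ ball a f.rIn) :=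
    ((f.contDiff (n := ⊤)).continuous_fderiv (by simp)).norm.continuousOn.div (hm.mono hsub)
      fun x hx => (hpos x (hsub hx)).ne'
  obtain ⟨C, hC⟩ := hcompact.bddAbove_image hcont
  refine ⟨1 / (|C| + 1), by positivity, fun x hx => ?_⟩
  by_cases hxA : x ∈ closedBall a f.rOut \ ball a f.rIn
  · have h := (div_le_iff₀ (hpos x hx)).1 (hC (mem_image_of_mem _ hxA))
    have := le_abs_self C
    rw [one_div, inv_mul_le_iff₀ (by positivity)]
    nlinarith [hpos x hx]
  · have hzero : fderiv ℝ f x = 0 := by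
      rcases le_or_gt f.rOut (dist x a) with hxa | hxa
      · exact IsLocalMin.fderiv_eq_zero (.of_forall fun y => by
          simpa [f.zero_of_le_dist hxa] using f.nonneg)
      · have hx' : x ∈ ball a f.rIn := by_contra fun h => hxA ⟨hxa.le, h⟩
        exact IsLocalMax.fderiv_eq_zero (.of_forall fun y => by
          simpa [f.one_of_mem_closedBall (ball_subset_closedBall hx')] using f.le_one)
    simpa [hzero] using (hpos x hx).le

lemma exists_pos_summable_isSmoothSeries_norm_fderiv_lt (f : ℕ → ContDiffBump a) {U : Set E}
    (hU : ∀ j, closedBall a (f j).rOut ⊆ U) {m : E → ℝ} (hm : ContinuousOn m (U \ {a}))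
    (hpos : ∀ x ∈ U \ {a}, 0 < m x) :
    ∃ c : ℕ → ℝ, (∀ j, 0 < c j) ∧ Summable c ∧ IsSmoothSeries (fun j x => c j * (1 - f j x)) ∧
      ∀ x ∈ U \ {a}, ‖fderiv ℝ (fun x => ∑' j, c j * (1 - f j x)) x‖ < m x := by
  have hf : ∀ j, ContDiff ℝ ∞ fun x => 1 - f j x := fun j => contDiff_const.sub (f j).contDiff
  obtain ⟨b, hb, hseries⟩ := exists_pos_forall_isSmoothSeries_mul (ι := Unit) fun _ => hf
  choose d hd hdm using fun j =>
    exists_pos_mul_norm_fderiv_contDiffBump_le (f j) (hU j) hm hpos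
  let w (j : ℕ) : ℝ := 1 / 4 * (1 / 2) ^ j
  have hw : HasSum w (1 / 4 * 2) := hasSum_geometric_two.mul_left _
  set c : ℕ → ℝ := fun j => min (b j) (min (d j) 1 * w j)
  have hc : ∀ j, 0 < c j := fun j => lt_min (hb j) (by have := hd j; positivity)
  have hcd : ∀ j, c j ≤ d j * w j := fun j => (min_le_right _ _).trans (by
    gcongr
    exact min_le_left _ _)
  have hτ := hseries c (fun j => (hc j).le) (fun j => min_le_left _ _) ()
  refine ⟨c, hc, hw.summable.of_nonneg_of_le (fun j => (hc j).le) fun j =>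
    (min_le_right _ _).trans (mul_le_of_le_one_left (by positivity) (min_le_right _ _)), hτ,
    fun x hx => ?_⟩
  have hterm : ∀ j, ‖fderiv ℝ (fun x => c j * (1 - f j x)) x‖ ≤ m x * w j := fun j => by
    rw [fderiv_const_mul ((hf j).differentiable (by simp) x), fderiv_const_sub, norm_smul,
      norm_neg, Real.norm_of_nonneg (hc j).le]
    calc c j * ‖fderiv ℝ (f j) x‖ ≤ d j * w j * ‖fderiv ℝ (f j) x‖ := by gcongr; exact hcd j
      _ = d j * ‖fderiv ℝ (f j) x‖ * w j := by ring
      _ ≤ m x * w j := by gcongr; exact hdm j x hx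
  rw [(hτ.hasFDerivAt x).fderiv]
  refine (tsum_of_norm_bounded (hw.mul_left (m x)) hterm).trans_lt ?_
  linarith [hpos x hx]

lemma exists_contDiff_norm_fderiv_lt {ρ : ℝ} (hρ : 0 < ρ) {U : Set E} (hU : closedBall a ρ ⊆ U)
    {m : E → ℝ} (hm : ContinuousOn m (U \ {a})) (hpos : ∀ x ∈ U \ {a}, 0 < m x) :
    ∃ τ : E → ℝ, ∃ S > 0, ContDiff ℝ ∞ τ ∧ τ a = 0 ∧ (∀ x ≠ a, 0 < τ x) ∧ (∀ x, τ x ≤ S) ∧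
      (∀ x ∉ ball a ρ, τ x = S) ∧ ∀ x ∈ U \ {a}, ‖fderiv ℝ τ x‖ < m x := by
  let f (j : ℕ) : ContDiffBump a := ⟨ρ / 2 ^ (j + 1), ρ / 2 ^ j, by positivity,
    div_lt_div_of_pos_left hρ (by positivity) (pow_lt_pow_right₀ one_lt_two j.lt_succ_self)⟩
  have hfρ : ∀ j, (f j).rOut ≤ ρ := fun j => div_le_self hρ.le (one_le_pow₀ one_le_two)
  obtain ⟨c, hc, hcsum, hτ, hslope⟩ := exists_pos_summable_isSmoothSeries_norm_fderiv_lt f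
    (fun j => (closedBall_subset_closedBall (hfρ j)).trans hU) hm hpos
  refine ⟨fun x => ∑' j, c j * (1 - f j x), ∑' j, c j, hcsum.tsum_pos (fun j => (hc j).le) 0 (hc 0),
    hτ.contDiff, ?_, fun x hx => ?_, fun x => ?_, fun x hx => ?_, hslope⟩
  · simp [(f _).one_of_mem_closedBall (mem_closedBall_self (f _).rIn_pos.le)]
  · obtain ⟨j, hj⟩ := (((tendsto_const_nhds (x := ρ)).div_atTop
      (tendsto_pow_atTop_atTop_of_one_lt one_lt_two)).eventually_lt_const (dist_pos.2 hx)).exists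
    refine (hτ.summable x).tsum_pos (fun j => mul_nonneg (hc j).le (sub_nonneg.2 (f j).le_one)) j ?_
    simpa [(f j).zero_of_le_dist (x := x) hj.le] using hc j
  · exact (hτ.summable x).tsum_le_tsum (fun j => mul_le_of_le_one_right (hc j).le
      (sub_le_self _ (f j).nonneg)) hcsum
  · have hzero : ∀ j, f j x = 0 := fun j => (f j).zero_of_le_dist ((hfρ j).trans (not_lt.1 hx))
    simp [hzero]

end SlopeBound

lemma exists_contDiff_deriv_pos_of_one_lt_abs : ∃ Q : ℝ → ℝ, ContDiff ℝ ∞ Q ∧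
    (∀ y, |y| ≤ 1 → Q y = 0) ∧ (∀ y, 0 ≤ deriv Q y) ∧ ∀ y, 1 < |y| → 0 < deriv Q y := by
  let Q (y : ℝ) : ℝ := y * Real.smoothTransition (y ^ 2 - 1)
  have hθ : ContDiff ℝ ∞ Real.smoothTransition := Real.smoothTransition.contDiff
  have hderiv : ∀ y, deriv Q y = Real.smoothTransition (y ^ 2 - 1) +
      2 * y ^ 2 * deriv Real.smoothTransition (y ^ 2 - 1) := fun y => by
    have hsq : HasDerivAt (fun y : ℝ => y ^ 2 - 1) (2 * y) y := by
      simpa using (hasDerivAt_pow 2 y).sub_const 1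
    have hcomp := (hθ.differentiable (by simp) (y ^ 2 - 1)).hasDerivAt.comp y hsq
    refine ((hasDerivAt_id y).mul hcomp).deriv.trans ?_
    simp only [Function.comp_apply, id_eq]
    ring
  have hnonneg : ∀ y, 0 ≤ 2 * y ^ 2 * deriv Real.smoothTransition (y ^ 2 - 1) := fun y =>
    mul_nonneg (by positivity) Real.smoothTransition.monotone.deriv_nonneg
  refine ⟨Q, by fun_prop, fun y hy => ?_, fun y => ?_, fun y hy => ?_⟩
  · simp [Q, Real.smoothTransition.zero_of_nonpos (x := y ^ 2 - 1)
      (sub_nonpos.2 ((sq_le_one_iff_abs_le_one y).2 hy))]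
  · rw [hderiv]
    exact add_nonneg (Real.smoothTransition.nonneg _) (hnonneg y)
  · rw [hderiv]
    exact add_pos_of_pos_of_nonneg
      (Real.smoothTransition.pos_of_pos (sub_pos.2 ((one_lt_sq_iff_one_lt_abs y).2 hy))) (hnonneg y)

lemma contDiff_comp_of_eventuallyEq_zero {w : E → ℝ} {a : E} (hw : ContDiffOn ℝ ∞ w {a}ᶜ)
    (hwa : ContinuousAt w a) {Q : ℝ → ℝ} (hQ : ContDiff ℝ ∞ Q) (hQw : Q =ᶠ[𝓝 (w a)] 0) :
    ContDiff ℝ ∞ fun x => Q (w x) := by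
  refine contDiff_iff_contDiffAt.2 fun x => ?_
  rcases eq_or_ne x a with rfl | hx
  · exact contDiffAt_const.congr_of_eventuallyEq (hwa.eventually hQw)
  · exact hQ.contDiffAt.comp x (hw.contDiffAt (isOpen_compl_singleton.mem_nhds hx))

theorem exists_contDiff_deriv_pos_comp_contDiff [FiniteDimensional ℝ E] {ι : Type*} [Countable ι]
    {a : E} {w : ι → E → ℝ} (hw : ∀ i, ContDiffOn ℝ ∞ (w i) {a}ᶜ)
    (hwa : ∀ i, ContinuousAt (w i) a) (hw0 : ∀ i, w i a = 0) :
    ∃ q : ℝ → ℝ, ContDiff ℝ ∞ q ∧ (∀ y, 0 ≤ deriv q y) ∧ (∀ y ≠ 0, 0 < deriv q y) ∧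
      ∀ i, ContDiff ℝ ∞ fun x => q (w i x) := by
  obtain ⟨Q, hQ, hQ0, hQnonneg, hQpos⟩ := exists_contDiff_deriv_pos_of_one_lt_abs
  let Qs (j : ℕ) (y : ℝ) : ℝ := Q ((j + 1) * y)
  have hQs : ∀ j, ContDiff ℝ ∞ (Qs j) := fun j => hQ.comp (contDiff_const.mul contDiff_id)
  have hQs_zero : ∀ j, Qs j =ᶠ[𝓝 0] 0 := fun j => by
    filter_upwards [(continuous_const_mul ((j : ℝ) + 1)).abs.tendsto 0 |>.eventually_lt_const
      (u := 1) (by simp)] with y hy using hQ0 _ hy.le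
  have hQs_deriv : ∀ j y, deriv (Qs j) y = (j + 1) * deriv Q ((j + 1) * y) := fun j y => by
    simpa [Qs] using deriv_comp_mul_left ((j : ℝ) + 1) Q y
  have hQsw : ∀ i j, ContDiff ℝ ∞ fun x => Qs j (w i x) := fun i j =>
    contDiff_comp_of_eventuallyEq_zero (hw i) (hwa i) (hQs j) ((hw0 i).symm ▸ hQs_zero j)
  obtain ⟨b, hb, hseries⟩ := exists_pos_forall_isSmoothSeries_mul (ι := Unit) fun _ => hQs
  obtain ⟨b', hb', hseries'⟩ := exists_pos_forall_isSmoothSeries_mul hQsw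
  let c (j : ℕ) : ℝ := min (b j) (b' j)
  have hc : ∀ j, 0 < c j := fun j => lt_min (hb j) (hb' j)
  have hq := hseries c (fun j => (hc j).le) (fun j => min_le_left _ _) ()
  have hderiv : ∀ y, HasSum (fun j => c j * ((j + 1) * deriv Q ((j + 1) * y)))
      (deriv (fun y => ∑' j, c j * Qs j y) y) := fun y => by
    have hsum := (hq.summable_fderiv y).hasSum.mapL (ContinuousLinearMap.apply ℝ ℝ (1 : ℝ))
    rw [← (hq.hasFDerivAt y).fderiv] at hsum
    simpa [deriv_const_mul _ ((hQs _).differentiable (by simp) y), hQs_deriv] using hsum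
  have hterm : ∀ y j, 0 ≤ c j * (((j : ℝ) + 1) * deriv Q ((j + 1) * y)) := fun y j =>
    mul_nonneg (hc j).le (mul_nonneg (by positivity) (hQnonneg _))
  refine ⟨_, hq.contDiff, fun y => (hderiv y).nonneg (hterm y), fun y hy => ?_, fun i =>
    (hseries' c (fun j => (hc j).le) (fun j => min_le_right _ _) i).contDiff⟩
  obtain ⟨j, hj⟩ := exists_nat_gt (1 / |y|)
  rw [← (hderiv y).tsum_eq]
  refine (hderiv y).summable.tsum_pos (hterm y) j (mul_pos (hc j) (mul_pos (by positivity) ?_))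
  refine hQpos _ ?_
  rw [div_lt_iff₀ (abs_pos.2 hy)] at hj
  rw [abs_mul, abs_of_pos (by positivity : (0 : ℝ) < j + 1)]
  linarith [abs_pos.2 hy]

lemma contDiffAt_invFun_and_deriv_pos {p : ℝ → ℝ} (hp : ContDiff ℝ ∞ p) (hpos : ∀ y, 0 < deriv p y)
    (y : ℝ) : ContDiffAt ℝ ∞ (Function.invFun p) (p y) ∧ 0 < deriv (Function.invFun p) (p y) := by
  have hinv := Function.leftInverse_invFun (strictMono_of_deriv_pos hpos).injective
  have hstrict : HasStrictDerivAt p (deriv p y) y := hp.contDiffAt.hasStrictDerivAt (by simp)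
  let e := ContinuousLinearEquiv.unitsEquivAut ℝ (Units.mk0 _ (hpos y).ne')
  have he : HasFDerivAt p (e : ℝ →L[ℝ] ℝ) y :=
    (hstrict.hasStrictFDerivAt_equiv (hpos y).ne').hasFDerivAt
  have hlocal : Function.invFun p =ᶠ[𝓝 (p y)] hp.contDiffAt.localInverse he (by simp) := by
    filter_upwards [(hp.contDiffAt.hasStrictFDerivAt' he (by simp)).eventually_right_inverse]
      with z hz
    conv_lhs => rw [← hz]
    exact hinv _
  have hsmooth := (hp.contDiffAt.to_localInverse he (by simp)).congr_of_eventuallyEq hlocal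
  refine ⟨hsmooth, ?_⟩
  have hone := (hsmooth.differentiableAt (by simp)).hasDerivAt.comp y hstrict.hasDerivAt
  rw [hinv.comp_eq_id] at hone
  have := hone.unique (hasDerivAt_id y)
  exact (mul_pos_iff_of_pos_right (hpos y)).1 (this ▸ one_pos)

lemma exists_abs_apply_lt_apply_of_norm_lt {L N : E →L[ℝ] ℝ} (h : ‖N‖ < ‖L‖) :
    ∃ v, |N v| < L v := by
  by_contra! hle
  refine h.not_ge (L.opNorm_le_bound (norm_nonneg N) fun v => (abs_le.2 ⟨?_, ?_⟩).trans
    (N.le_opNorm v))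
  · simpa [neg_le] using hle (-v)
  · exact hle v

/-- Conjugate the average of `q (u + τ)` and `q (u - τ)` back by what this average becomes where
`τ` is the constant `S`. The outcome is `u` wherever `τ = S`, and it is smooth as soon as
`q (u ± τ)` are. -/
def flattenedAverage {X : Type*} (q : ℝ → ℝ) (S : ℝ) (u τ : X → ℝ) (x : X) : ℝ :=
  Function.invFun (fun y => q (y + S) + q (y - S)) (q (u x + τ x) + q (u x - τ x))

section FlattenedAverage

variable {q : ℝ → ℝ} {S : ℝ} {u τ : E → ℝ}

lemma deriv_add_shift_pos (hq : ContDiff ℝ ∞ q) (hq_nonneg : ∀ y, 0 ≤ deriv q y)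
    (hq_pos : ∀ y ≠ 0, 0 < deriv q y) (hS : 0 < S) (y : ℝ) :
    0 < deriv (fun y => q (y + S) + q (y - S)) y := by
  have hdiff := hq.differentiable (by simp)
  have hderiv := ((hdiff (y + S)).hasDerivAt.comp_add_const y S).add
    ((hdiff (y - S)).hasDerivAt.comp_sub_const y S)
  refine hderiv.deriv.symm ▸ ?_
  rcases eq_or_ne (y + S) 0 with h | h
  · exact add_pos_of_nonneg_of_pos (hq_nonneg _) (hq_pos _ (by linarith))
  · exact add_pos_of_pos_of_nonneg (hq_pos _ h) (hq_nonneg _)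

lemma mem_range_add_shift (hq : Continuous q) (hmono : Monotone q) {y t : ℝ} (ht : |t| ≤ S) :
    q (y + t) + q (y - t) ∈ range fun y => q (y + S) + q (y - S) := by
  obtain ⟨h₁, h₂⟩ := abs_le.1 ht
  refine mem_range_of_exists_le_of_exists_ge (by fun_prop) ⟨y - 2 * S, ?_⟩ ⟨y + 2 * S, ?_⟩ <;>
    exact add_le_add (hmono (by linarith)) (hmono (by linarith))

lemma flattenedAverage_eq_self {X : Type*} {u τ : X → ℝ} (hq : ContDiff ℝ ∞ q)
    (hq_nonneg : ∀ y, 0 ≤ deriv q y) (hq_pos : ∀ y ≠ 0, 0 < deriv q y) (hS : 0 < S) {x : X}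
    (hx : τ x = S) :
    flattenedAverage q S u τ x = u x := by
  rw [flattenedAverage, hx]
  exact Function.leftInverse_invFun
    (strictMono_of_deriv_pos (deriv_add_shift_pos hq hq_nonneg hq_pos hS)).injective (u x)

lemma contDiffAt_flattenedAverage_and_fderiv_eq_smul (hq : ContDiff ℝ ∞ q)
    (hq_nonneg : ∀ y, 0 ≤ deriv q y)
    (hq_pos : ∀ y ≠ 0, 0 < deriv q y) (hS : 0 < S) (hτS : ∀ x, |τ x| ≤ S)
    (hsum : ContDiff ℝ ∞ fun x => q (u x + τ x) + q (u x - τ x)) (x : E) :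
    ContDiffAt ℝ ∞ (flattenedAverage q S u τ) x ∧
      ∃ d > (0 : ℝ), fderiv ℝ (flattenedAverage q S u τ) x =
        d • fderiv ℝ (fun x => q (u x + τ x) + q (u x - τ x)) x := by
  obtain ⟨y, hy⟩ := mem_range_add_shift hq.continuous
    (monotone_of_deriv_nonneg (hq.differentiable (by simp)) hq_nonneg) (y := u x) (hτS x)
  have hp : ContDiff ℝ ∞ fun y => q (y + S) + q (y - S) := by fun_prop
  obtain ⟨hsmooth, hpos⟩ :=
    contDiffAt_invFun_and_deriv_pos hp (deriv_add_shift_pos hq hq_nonneg hq_pos hS) y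
  change ContDiffAt ℝ ∞ _ ((fun y => q (y + S) + q (y - S)) y) at hsmooth
  change 0 < deriv _ ((fun y => q (y + S) + q (y - S)) y) at hpos
  rw [hy] at hsmooth hpos
  exact ⟨hsmooth.comp x hsum.contDiffAt, _, hpos,
    ((hsmooth.differentiableAt (by simp)).hasDerivAt.comp_hasFDerivAt x
      (hsum.differentiable (by simp) x).hasFDerivAt).fderiv⟩

lemma fderiv_comp_add_comp_sub_ne_zero (hq : ContDiff ℝ ∞ q) (hq_nonneg : ∀ y, 0 ≤ deriv q y)
    (hq_pos : ∀ y ≠ 0, 0 < deriv q y) {x : E} (hu : DifferentiableAt ℝ u x)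
    (hτ : DifferentiableAt ℝ τ x) (hτ0 : τ x ≠ 0) (hlt : ‖fderiv ℝ τ x‖ < ‖fderiv ℝ u x‖) :
    fderiv ℝ (fun x => q (u x + τ x) + q (u x - τ x)) x ≠ 0 := by
  obtain ⟨v, hv⟩ := exists_abs_apply_lt_apply_of_norm_lt hlt
  obtain ⟨hv₁, hv₂⟩ := abs_lt.1 hv
  have hdiff := hq.differentiable (by simp)
  have hderiv := ((hdiff (u x + τ x)).hasDerivAt.comp_hasFDerivAt x
    (hu.hasFDerivAt.add hτ.hasFDerivAt)).add ((hdiff (u x - τ x)).hasDerivAt.comp_hasFDerivAt x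
    (hu.hasFDerivAt.sub hτ.hasFDerivAt))
  have hascent : 0 < deriv q (u x + τ x) * (fderiv ℝ u x v + fderiv ℝ τ x v) +
      deriv q (u x - τ x) * (fderiv ℝ u x v - fderiv ℝ τ x v) := by
    have hadd : 0 < fderiv ℝ u x v + fderiv ℝ τ x v := by linarith
    have hsub : 0 < fderiv ℝ u x v - fderiv ℝ τ x v := by linarith
    rcases eq_or_ne (u x + τ x) 0 with h | h
    · exact add_pos_of_nonneg_of_pos (mul_nonneg (hq_nonneg _) hadd.le)
        (mul_pos (hq_pos _ fun h' => hτ0 (by linarith)) hsub)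
    · exact add_pos_of_pos_of_nonneg (mul_pos (hq_pos _ h) hadd) (mul_nonneg (hq_nonneg _) hsub.le)
  intro hzero
  refine hascent.ne' ?_
  simpa [mul_add] using congr($(hderiv.fderiv.symm.trans hzero) v)

end FlattenedAverage

theorem exists_contDiff_eventuallyEq_fderiv_ne_zero [FiniteDimensional ℝ E] {u : E → ℝ} {a : E}
    {r : ℝ} (hr : 0 < r) (hu : ContDiffOn ℝ ∞ u {a}ᶜ) (hua : ContinuousAt u a)
    (hdu : ∀ x ∈ ball a r \ {a}, fderiv ℝ u x ≠ 0) :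
    ∃ v : E → ℝ, ContDiff ℝ ∞ v ∧ (∀ x ∉ ball a r, v =ᶠ[𝓝 x] u) ∧
      ∀ x ∈ ball a r \ {a}, fderiv ℝ v x ≠ 0 := by
  wlog hu0 : u a = 0 generalizing u
  · obtain ⟨v, hv, hvu, hdv⟩ := @this (fun x => u x - u a) (hu.sub contDiffOn_const)
      (hua.sub continuousAt_const) (by simpa only [fderiv_sub_const] using hdu) (sub_self _)
    exact ⟨fun x => v x + u a, hv.add contDiff_const, fun x hx => by
      filter_upwards [hvu x hx] with y hy
      simp [hy], by simpa only [fderiv_add_const] using hdv⟩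
  have hdiff : ∀ x ≠ a, DifferentiableAt ℝ u x := fun x hx =>
    (hu.contDiffAt (isOpen_compl_singleton.mem_nhds hx)).differentiableAt (by simp)
  have hslope_cont : ContinuousOn (fun x => ‖fderiv ℝ u x‖) (ball a r \ {a}) :=
    ((hu.continuousOn_fderiv_of_isOpen isOpen_compl_singleton (by simp)).mono
      fun x hx => hx.2).norm
  obtain ⟨τ, S, hS, hτ, hτa, hτpos, hτS, hτeq, hslope⟩ := exists_contDiff_norm_fderiv_lt
    (half_pos hr) (closedBall_subset_ball (half_lt_self hr)) hslope_cont
    fun x hx => norm_pos_iff.2 (hdu x hx)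
  have hτabs : ∀ x, |τ x| ≤ S := fun x => by
    rcases eq_or_ne x a with rfl | hx
    · simpa [hτa] using hS.le
    · exact (abs_of_pos (hτpos x hx)).trans_le (hτS x)
  obtain ⟨q, hq, hq_nonneg, hq_pos, hqw⟩ := exists_contDiff_deriv_pos_comp_contDiff (a := a)
    (w := ![fun x => u x + τ x, fun x => u x - τ x])
    (Fin.forall_fin_two.2 ⟨hu.add hτ.contDiffOn, hu.sub hτ.contDiffOn⟩)
    (Fin.forall_fin_two.2 ⟨hua.add hτ.continuous.continuousAt, hua.sub hτ.continuous.continuousAt⟩)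
    (Fin.forall_fin_two.2 ⟨by simp [hu0, hτa], by simp [hu0, hτa]⟩)
  have hv := contDiffAt_flattenedAverage_and_fderiv_eq_smul hq hq_nonneg hq_pos hS hτabs
    ((hqw 0).add (hqw 1))
  refine ⟨flattenedAverage q S u τ, contDiff_iff_contDiffAt.2 fun x => (hv x).1, fun x hx => ?_,
    fun x hx => ?_⟩
  · have hxr : x ∈ (closedBall a (r / 2))ᶜ := fun h =>
      hx (closedBall_subset_ball (half_lt_self hr) h)
    filter_upwards [isClosed_closedBall.isOpen_compl.mem_nhds hxr] with y hy
    exact flattenedAverage_eq_self hq hq_nonneg hq_pos hS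
      (hτeq y fun h => hy (ball_subset_closedBall h))
  · obtain ⟨d, hd, hfderiv⟩ := (hv x).2
    rw [hfderiv]
    exact (smul_ne_zero_iff_right hd.ne').2 (fderiv_comp_add_comp_sub_ne_zero hq hq_nonneg hq_pos
      (hdiff x hx.2) (hτ.differentiable (by simp) x) (hτpos x hx.2).ne' (hslope x hx))

end Smoothing

section SquareRoots

lemma isPreconnected_preimage_of_isOpenMap_of_isClosedMap {X Y : Type*} [TopologicalSpace X]
    [TopologicalSpace Y] {f : X → Y} (hopen : IsOpenMap f) (hclosed : IsClosedMap f) {s : Set Y}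
    (hs : IsPreconnected s) {x : X} (hx : f x ∈ s) (hfiber : ∀ y, f y = f x → y = x) :
    IsPreconnected (f ⁻¹' s) := by
  have := isPreconnected_iff_preconnectedSpace.1 hs
  have mem_of_isClopen : ∀ u : Set (f ⁻¹' s), IsClopen u → u.Nonempty → ⟨x, hx⟩ ∈ u := by
    intro u hu hne
    have himage : IsClopen (s.restrictPreimage f '' u) :=
      ⟨hclosed.restrictPreimage s u hu.1, hopen.restrictPreimage s u hu.2⟩
    obtain ⟨⟨y, hy⟩, hyu, hyx⟩ : (⟨f x, hx⟩ : s) ∈ s.restrictPreimage f '' u :=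
      himage.eq_univ (hne.image _) ▸ mem_univ _
    obtain rfl := hfiber y (congrArg Subtype.val hyx)
    exact hyu
  rw [isPreconnected_iff_preconnectedSpace, preconnectedSpace_iff_clopen]
  intro u hu
  by_contra! h
  obtain ⟨hne, hne_univ⟩ := h
  exact mem_of_isClopen _ hu.compl (nonempty_compl.2 hne_univ) (mem_of_isClopen u hu hne)

lemma isPreconnected_union_of_nonempty_inter_closure {X : Type*} [TopologicalSpace X] {s t : Set X}
    (hs : IsPreconnected s) (ht : IsPreconnected t) (h : (s ∩ closure t).Nonempty) :
    IsPreconnected (s ∪ t) := by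
  obtain ⟨p, hps, hpt⟩ := h
  have ht' : IsPreconnected (insert p t) :=
    ht.subset_closure (subset_insert _ _) (insert_subset hpt subset_closure)
  have := hs.union p hps (mem_insert p t) ht'
  rwa [union_insert, insert_eq_of_mem (mem_union_left t hps)] at this

/- Near a point the roots on the various `V n` agree up to sign, so a limit along an ultrafilter
chooses the signs consistently. -/
lemma exists_continuousOn_sq_eq_of_exhaustion {X : Type*} [TopologicalSpace X]
    [LocallyConnectedSpace X] {g : X → ℂ} {D : Set X} {V : ℕ → Set X} (hg : ∀ x ∈ D, g x ≠ 0)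
    (hV : ∀ x ∈ D, ∃ u ∈ 𝓝 x, u ⊆ D ∧ ∀ᶠ n in atTop, u ⊆ V n)
    (hroot : ∀ n, ∃ s : X → ℂ, ContinuousOn s (V n) ∧ ∀ x ∈ V n, s x ^ 2 = g x) :
    ∃ s : X → ℂ, ContinuousOn s D ∧ ∀ x ∈ D, s x ^ 2 = g x := by
  choose s hs hsq using hroot
  have hlocal : ∀ x ∈ D, ∃ σ : X → ℂ, ContinuousAt σ x ∧ ∃ u ∈ 𝓝 x,
      ∀ᶠ n in hyperfilter ℕ, EqOn (s n) σ u := by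
    intro x hx
    obtain ⟨u, hu, huD, huV⟩ := hV x hx
    obtain ⟨v, ⟨hv, hxv, hvc⟩, hvu⟩ :=
      (LocallyConnectedSpace.open_connected_basis x).mem_iff.1 hu
    obtain ⟨N, hN⟩ := huV.exists
    have hsN : ContinuousOn (s N) v := (hs N).mono (hvu.trans hN)
    have hsign : ∀ᶠ n in hyperfilter ℕ, EqOn (s n) (s N) v ∨ EqOn (s n) (-s N) v := by
      filter_upwards [huV.filter_mono Nat.hyperfilter_le_atTop] with n hn
      refine hvc.isPreconnected.eq_or_eq_neg_of_sq_eq ((hs n).mono (hvu.trans hn)) hsN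
        (fun y hy => ?_) fun {y} hy h0 => hg y (huD (hvu hy)) ?_
      · simp only [Pi.pow_apply, hsq n y (hn (hvu hy)), hsq N y (hN (hvu hy))]
      · rw [← hsq N y (hN (hvu hy)), h0, zero_pow two_ne_zero]
    have hcont := hsN.continuousAt (hv.mem_nhds hxv)
    rcases Ultrafilter.eventually_or.1 hsign with h | h
    exacts [⟨s N, hcont, v, hv.mem_nhds hxv, h⟩, ⟨-s N, hcont.neg, v, hv.mem_nhds hxv, h⟩]
  choose! σ hσ u hu hσu using hlocal
  have heq : ∀ x ∈ D, ∀ y ∈ D, y ∈ u x → σ y y = σ x y := by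
    intro x hx y hy hyx
    obtain ⟨n, hny, hnx⟩ := ((hσu y hy).and (hσu x hx)).exists
    rw [← hny (mem_of_mem_nhds (hu y hy)), hnx hyx]
  refine ⟨fun x => σ x x, fun x hx => ?_, fun x hx => ?_⟩
  · refine (hσ x hx).continuousWithinAt.congr_of_eventuallyEq ?_ rfl
    filter_upwards [self_mem_nhdsWithin, mem_nhdsWithin_of_mem_nhds (hu x hx)] with y hy hyx
    exact heq x hx y hy hyx
  · obtain ⟨w, hw, -, hwV⟩ := hV x hx
    obtain ⟨n, hnV, hn⟩ := ((hwV.filter_mono Nat.hyperfilter_le_atTop).and (hσu x hx)).exists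
    calc σ x x ^ 2 = s n x ^ 2 := by rw [hn (mem_of_mem_nhds (hu x hx))]
      _ = g x := hsq n x (hnV (mem_of_mem_nhds hw))

lemma exists_continuousOn_sq_eq_sub_of_dist_lt {V : Set ℂ} {w w' : ℂ}
    (hV : ∀ z ∈ V, dist w w' < dist z w)
    (hroot : ∃ s : ℂ → ℂ, ContinuousOn s V ∧ ∀ z ∈ V, s z ^ 2 = z - w) :
    ∃ s : ℂ → ℂ, ContinuousOn s V ∧ ∀ z ∈ V, s z ^ 2 = z - w' := by
  obtain ⟨s, hs, hsq⟩ := hroot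
  have hne : ∀ z ∈ V, z - w ≠ 0 := fun z hz =>
    sub_ne_zero.2 (dist_pos.1 (dist_nonneg.trans_lt (hV z hz)))
  refine ⟨fun z => s z * (1 + (w - w') / (z - w)) ^ (2⁻¹ : ℂ), hs.mul (ContinuousOn.cpow_const
    (continuousOn_const.add (continuousOn_const.div (by fun_prop) hne)) fun z hz => ?_),
    fun z hz => ?_⟩
  · refine Complex.mem_slitPlane_of_norm_lt_one ?_
    rw [norm_div, div_lt_one (norm_pos_iff.2 (hne z hz)), ← dist_eq_norm, ← dist_eq_norm]
    exact hV z hz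
  · have := hne z hz
    rw [mul_pow, Complex.cpow_ofNat_inv_pow, hsq z hz]
    field

theorem exists_continuousOn_sq_eq_sub_of_isPreconnected {C D : Set ℂ} (hC : IsPreconnected C)
    (hC_closed : IsClosed C) (hD : IsOpen D) (hCD : Disjoint C D) {w₀ w : ℂ} (hw₀ : w₀ ∈ C)
    (hw : w ∈ C) (hroot : ∃ s : ℂ → ℂ, ContinuousOn s D ∧ ∀ z ∈ D, s z ^ 2 = z - w₀) :
    ∃ s : ℂ → ℂ, ContinuousOn s D ∧ ∀ z ∈ D, s z ^ 2 = z - w := by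
  let V (n : ℕ) : Set ℂ := {z ∈ D | ∀ c ∈ C, 1 / ((n : ℝ) + 1) < dist z c}
  refine exists_continuousOn_sq_eq_of_exhaustion (V := V)
    (fun z hz => sub_ne_zero.2 (hCD.ne_of_mem hw hz).symm) (fun z hz => ?_) fun n => ?_
  · obtain ⟨r, hr, hball⟩ := Metric.isOpen_iff.1 (hD.inter hC_closed.isOpen_compl) z
      ⟨hz, fun h => hCD.ne_of_mem h hz rfl⟩
    refine ⟨ball z (r / 2), ball_mem_nhds _ (half_pos hr), fun y hy =>
      (hball (ball_subset_ball (by linarith) hy)).1, ?_⟩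
    filter_upwards [(tendsto_one_div_add_atTop_nhds_zero_nat (𝕜 := ℝ)).eventually_lt_const
      (half_pos hr)] with n hn y hy
    refine ⟨(hball (ball_subset_ball (by linarith) hy)).1, fun c hc => hn.trans ?_⟩
    have hrc : r ≤ dist c z := not_lt.1 fun h => (hball (mem_ball.2 h)).2 hc
    linarith [dist_triangle c y z, mem_ball.1 hy, dist_comm c y]
  · let P (w : ℂ) : Prop := ∃ s : ℂ → ℂ, ContinuousOn s (V n) ∧ ∀ z ∈ V n, s z ^ 2 = z - w
    refine (hC.induction₂ (fun w w' => P w ↔ P w') (fun w hw => ?_)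
      (fun _ _ _ _ _ _ => Iff.trans) (fun _ _ _ _ => Iff.symm) hw₀ hw).1 ?_
    · filter_upwards [self_mem_nhdsWithin, mem_nhdsWithin_of_mem_nhds
        (ball_mem_nhds w (Nat.one_div_pos_of_nat (n := n) (α := ℝ)))] with w' hw' hdist
      have hdist' : dist w w' < 1 / ((n : ℝ) + 1) := by rwa [dist_comm]
      exact ⟨exists_continuousOn_sq_eq_sub_of_dist_lt fun z hz => hdist'.trans (hz.2 w hw),
        exists_continuousOn_sq_eq_sub_of_dist_lt fun z hz => hdist.trans (hz.2 w' hw')⟩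
    · obtain ⟨s, hs, hsq⟩ := hroot
      exact ⟨s, hs.mono fun z hz => hz.1, fun z hz => hsq z hz.1⟩

end SquareRoots

section DiscDomain

/-- A connected open subset `D` of the unit disc which is simply connected in the form needed for
extracting square roots: its complement in the closed unit disc is connected. -/
structure IsDiscDomain (D : Set ℂ) : Prop where
  isOpen : IsOpen D
  subset_ball : D ⊆ ball 0 1
  isPreconnected : IsPreconnected D
  isPreconnected_closedBall_diff : IsPreconnected (closedBall 0 1 \ D)

/-- The Blaschke factor: the automorphism of the unit disc sending `w` to `0`, with inverse
`blaschke (-w)`. -/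
def blaschke (w y : ℂ) : ℂ := (y - w) / (1 - conj w * y)

variable {D : Set ℂ} {w y : ℂ}

lemma one_sub_conj_mul_ne_zero (hw : ‖w‖ < 1) (hy : ‖y‖ ≤ 1) : 1 - conj w * y ≠ 0 := by
  refine sub_ne_zero.2 fun h => ?_
  have : ‖w‖ * ‖y‖ = 1 := by rw [← RCLike.norm_conj w, ← norm_mul, ← h, norm_one]
  nlinarith [norm_nonneg w, norm_nonneg y]

lemma one_sub_norm_blaschke_sq (hw : ‖w‖ < 1) (hy : ‖y‖ ≤ 1) :
    1 - ‖blaschke w y‖ ^ 2 = (1 - ‖w‖ ^ 2) * (1 - ‖y‖ ^ 2) / ‖1 - conj w * y‖ ^ 2 := by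
  have hden := norm_pos_iff.2 (one_sub_conj_mul_ne_zero hw hy)
  have h : ‖1 - conj w * y‖ ^ 2 - ‖y - w‖ ^ 2 = (1 - ‖w‖ ^ 2) * (1 - ‖y‖ ^ 2) := by
    simp only [← Complex.normSq_eq_norm_sq, Complex.normSq_apply, Complex.sub_re, Complex.sub_im,
      Complex.mul_re, Complex.mul_im, Complex.one_re, Complex.one_im, Complex.conj_re,
      Complex.conj_im]
    ring
  rw [blaschke, norm_div, div_pow, ← h]
  field

lemma norm_blaschke_le_one (hw : ‖w‖ < 1) (hy : ‖y‖ ≤ 1) : ‖blaschke w y‖ ≤ 1 := by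
  have hw2 := (sq_lt_one_iff₀ (norm_nonneg w)).2 hw
  have hy2 := (sq_le_one_iff₀ (norm_nonneg y)).2 hy
  rw [← sq_le_one_iff₀ (norm_nonneg _), ← sub_nonneg, one_sub_norm_blaschke_sq hw hy]
  exact div_nonneg (mul_nonneg (by linarith) (by linarith)) (sq_nonneg _)

lemma norm_blaschke_lt_one (hw : ‖w‖ < 1) (hy : ‖y‖ < 1) : ‖blaschke w y‖ < 1 := by
  have hw2 := (sq_lt_one_iff₀ (norm_nonneg w)).2 hw
  have hy2 := (sq_lt_one_iff₀ (norm_nonneg y)).2 hy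
  rw [← sq_lt_one_iff₀ (norm_nonneg _), ← sub_pos, one_sub_norm_blaschke_sq hw hy.le]
  exact div_pos (mul_pos (by linarith) (by linarith))
    (pow_pos (norm_pos_iff.2 (one_sub_conj_mul_ne_zero hw hy.le)) 2)

lemma blaschke_neg_blaschke (hw : ‖w‖ < 1) (hy : ‖y‖ ≤ 1) :
    blaschke (-w) (blaschke w y) = y := by
  have hden := one_sub_conj_mul_ne_zero hw hy
  have hden' : 1 + conj w * blaschke w y ≠ 0 := by
    simpa using one_sub_conj_mul_ne_zero (by rwa [norm_neg] : ‖-w‖ < 1) (norm_blaschke_le_one hw hy)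
  have hmul : blaschke w y * (1 - conj w * y) = y - w := div_mul_cancel₀ _ hden
  rw [blaschke, map_neg, neg_mul, sub_neg_eq_add, sub_neg_eq_add, div_eq_iff hden']
  linear_combination hmul

lemma hasDerivAt_blaschke (hw : ‖w‖ < 1) (hy : ‖y‖ ≤ 1) :
    HasDerivAt (blaschke w) ((1 - ‖w‖ ^ 2) / (1 - conj w * y) ^ 2) y := by
  have hden : HasDerivAt (fun y => 1 - conj w * y) (-(conj w * 1)) y :=
    ((hasDerivAt_id y).const_mul (conj w)).const_sub 1
  refine (((hasDerivAt_id y).sub_const w).div hden (one_sub_conj_mul_ne_zero hw hy)).congr_deriv ?_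
  rw [← Complex.conj_mul' w]
  simp only [id]
  ring

lemma IsDiscDomain.image_of_invOn (hD : IsDiscDomain D) {e k : ℂ → ℂ}
    (he : ContinuousOn e (closedBall 0 1)) (hk : ContinuousOn k (closedBall 0 1))
    (he_ball : MapsTo e (ball 0 1) (ball 0 1))
    (he_closedBall : MapsTo e (closedBall 0 1) (closedBall 0 1))
    (hk_closedBall : MapsTo k (closedBall 0 1) (closedBall 0 1))
    (hinv : InvOn k e (closedBall 0 1) (closedBall 0 1)) :
    IsDiscDomain (e '' D) := by
  have hD_closedBall : D ⊆ closedBall 0 1 := hD.subset_ball.trans ball_subset_closedBall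
  have himage : ∀ s ⊆ closedBall (0 : ℂ) 1, e '' s = closedBall 0 1 ∩ k ⁻¹' s := fun s hs =>
    Subset.antisymm (image_subset_iff.2 fun x hx =>
      ⟨he_closedBall (hs hx), by rwa [mem_preimage, hinv.1 (hs hx)]⟩)
      fun y hy => ⟨k y, hy.2, hinv.2 hy.1⟩
  refine ⟨?_, (image_mono hD.subset_ball).trans he_ball.image_subset,
    hD.isPreconnected.image e (he.mono hD_closedBall), ?_⟩
  · have : e '' D = ball 0 1 ∩ k ⁻¹' D := by
      refine Subset.antisymm (subset_inter ((image_mono hD.subset_ball).trans he_ball.image_subset)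
        ((himage D hD_closedBall).subset.trans inter_subset_right)) ?_
      rw [himage D hD_closedBall]
      exact inter_subset_inter_left _ ball_subset_closedBall
    rw [this]
    exact (hk.mono ball_subset_closedBall).isOpen_inter_preimage isOpen_ball hD.isOpen
  · have : closedBall 0 1 \ e '' D = e '' (closedBall 0 1 \ D) := by
      rw [himage D hD_closedBall, himage _ sdiff_subset]
      ext y
      simp only [Set.mem_sdiff, mem_inter_iff, mem_preimage]
      have := @hk_closedBall y
      tauto
    rw [this]
    exact hD.isPreconnected_closedBall_diff.image e (he.mono sdiff_subset)

lemma IsDiscDomain.image_blaschke (hD : IsDiscDomain D) (hw : ‖w‖ < 1) :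
    IsDiscDomain (blaschke w '' D) := by
  have hw' : ‖-w‖ < 1 := by rwa [norm_neg]
  have hcont : ∀ {w : ℂ}, ‖w‖ < 1 → ContinuousOn (blaschke w) (closedBall 0 1) := fun hw y hy =>
    (hasDerivAt_blaschke hw (mem_closedBall_zero_iff.1 hy)).continuousAt.continuousWithinAt
  refine hD.image_of_invOn (k := blaschke (-w)) (hcont hw) (hcont hw') ?_ ?_ ?_ ⟨?_, ?_⟩ <;>
    intro y hy <;> simp only [mem_ball_zero_iff, mem_closedBall_zero_iff] at hy ⊢
  · exact norm_blaschke_lt_one hw hy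
  · exact norm_blaschke_le_one hw hy
  · exact norm_blaschke_le_one hw' hy
  · exact blaschke_neg_blaschke hw hy
  · simpa only [neg_neg] using blaschke_neg_blaschke hw' hy

lemma IsDiscDomain.exists_continuousOn_sq_eq (hD : IsDiscDomain D) (h0 : (0 : ℂ) ∉ D) :
    ∃ s : ℂ → ℂ, ContinuousOn s D ∧ ∀ z ∈ D, s z ^ 2 = z := by
  have h1 : (1 : ℂ) ∉ D := fun h => by simpa using hD.subset_ball h
  have hroot : ∃ s : ℂ → ℂ, ContinuousOn s D ∧ ∀ z ∈ D, s z ^ 2 = z - 1 := by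
    refine ⟨fun z => Complex.I * (1 - z) ^ (2⁻¹ : ℂ), continuousOn_const.mul
      (ContinuousOn.cpow_const (by fun_prop) fun z hz => ?_), fun z _ => ?_⟩
    · have : ‖-z‖ < 1 := by rw [norm_neg]; exact mem_ball_zero_iff.1 (hD.subset_ball hz)
      exact sub_eq_add_neg 1 z ▸ Complex.mem_slitPlane_of_norm_lt_one this
    · rw [mul_pow, Complex.cpow_ofNat_inv_pow, Complex.I_sq]
      ring
  simpa using exists_continuousOn_sq_eq_sub_of_isPreconnected hD.isPreconnected_closedBall_diff
    (isClosed_closedBall.sdiff hD.isOpen) hD.isOpen disjoint_sdiff_left ⟨by simp, h1⟩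
    (w := 0) ⟨by simp, h0⟩ hroot

section

variable {s : ℂ → ℂ}

lemma preimage_sq_eq_image_union_neg (hsq : ∀ z ∈ D, s z ^ 2 = z) :
    (fun z : ℂ => z ^ 2) ⁻¹' D = s '' D ∪ -(s '' D) := by
  ext z
  constructor
  · intro hz
    rcases sq_eq_sq_iff_eq_or_eq_neg.1 (hsq _ hz) with h | h
    exacts [Or.inl ⟨_, hz, h⟩, Or.inr ⟨_, hz, h⟩]
  · rintro (⟨y, hy, hyz⟩ | ⟨y, hy, hyz⟩)
    · rwa [mem_preimage, ← hyz, hsq y hy]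
    · rwa [mem_preimage, ← neg_sq, ← hyz, hsq y hy]

lemma sqrt_ne_zero (hsq : ∀ z ∈ D, s z ^ 2 = z) (h0 : (0 : ℂ) ∉ D) (hy : y ∈ D) : s y ≠ 0 := by
  intro h
  have := hsq y hy
  rw [h, zero_pow two_ne_zero] at this
  exact h0 (this ▸ hy)

lemma disjoint_image_neg_image (hsq : ∀ z ∈ D, s z ^ 2 = z) (h0 : (0 : ℂ) ∉ D) :
    Disjoint (s '' D) (-(s '' D)) := by
  rw [disjoint_left]
  rintro _ ⟨y, hy, rfl⟩ ⟨x, hx, hxy⟩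
  have heq : x = y := by rw [← hsq x hx, ← hsq y hy, hxy, neg_sq]
  rw [heq] at hxy
  exact sqrt_ne_zero hsq h0 hy (self_eq_neg.1 hxy)

lemma isOpen_image_sqrt (hD : IsOpen D) (hs : ContinuousOn s D) (hsq : ∀ z ∈ D, s z ^ 2 = z)
    (h0 : (0 : ℂ) ∉ D) : IsOpen (s '' D) := by
  have hcont : Continuous fun z : ℂ => z ^ 2 := continuous_pow 2
  have : s '' D = (fun z : ℂ => z ^ 2) ⁻¹' D ∩ (fun z => s (z ^ 2) + z) ⁻¹' {0}ᶜ := by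
    ext z
    constructor
    · rintro ⟨y, hy, rfl⟩
      simp [hsq y hy, hy, ← two_mul, sqrt_ne_zero hsq h0 hy]
    · rintro ⟨hz, hne⟩
      exact ⟨z ^ 2, hz, (sq_eq_sq_iff_eq_or_eq_neg.1 (hsq _ hz)).resolve_right fun h =>
        hne (by simp [h])⟩
  rw [this]
  exact ((hs.comp hcont.continuousOn fun z hz => hz).add continuousOn_id).isOpen_inter_preimage
    (hD.preimage hcont) isOpen_compl_singleton

lemma IsDiscDomain.image_sqrt (hD : IsDiscDomain D) (h0 : (0 : ℂ) ∉ D) (hne : D.Nonempty)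
    (hs : ContinuousOn s D) (hsq : ∀ z ∈ D, s z ^ 2 = z) : IsDiscDomain (s '' D) := by
  have hopen : IsOpen (s '' D) := isOpen_image_sqrt hD.isOpen hs hsq h0
  have hpre : IsPreconnected (s '' D) := hD.isPreconnected.image s hs
  have hball : ∀ {z : ℂ}, z ^ 2 ∈ ball (0 : ℂ) 1 ↔ z ∈ ball (0 : ℂ) 1 := by
    simp
  have hclosedBall : ∀ {z : ℂ}, z ^ 2 ∈ closedBall (0 : ℂ) 1 ↔ z ∈ closedBall (0 : ℂ) 1 := by
    simp
  have hunion := preimage_sq_eq_image_union_neg hsq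
  have hsub : s '' D ∪ -(s '' D) ⊆ ball 0 1 := fun z hz =>
    hball.1 (hD.subset_ball (hunion.superset hz))
  have hdisj := disjoint_image_neg_image hsq h0
  refine ⟨hopen, subset_union_left.trans hsub, hpre, ?_⟩
  have hcompl : closedBall 0 1 \ s '' D =
      (fun z : ℂ => z ^ 2) ⁻¹' (closedBall 0 1 \ D) ∪ -(s '' D) := by
    ext z
    have h1 := Set.ext_iff.1 hunion z
    have h2 := @hclosedBall z
    have h3 (hz : z ∈ s '' D ∪ -(s '' D)) : z ∈ closedBall 0 1 := ball_subset_closedBall (hsub hz)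
    have h4 (hz : z ∈ s '' D) : z ∉ -(s '' D) := disjoint_left.1 hdisj hz
    simp only [Set.mem_sdiff, mem_preimage, mem_union] at *
    tauto
  obtain ⟨p, hp⟩ : (frontier (-(s '' D))).Nonempty := by
    refine nonempty_frontier_iff.2 ⟨(hne.image s).neg, fun h => ?_⟩
    have h1 : (1 : ℂ) ∈ ball 0 1 := hsub (Or.inr (h ▸ mem_univ 1))
    simp at h1
  rw [hopen.neg.frontier_eq] at hp
  have hp_compl : p ∈ closedBall 0 1 \ s '' D :=
    ⟨closure_minimal (subset_union_right.trans (hsub.trans ball_subset_closedBall))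
      isClosed_closedBall hp.1, disjoint_right.1 (hdisj.closure_right hopen) hp.1⟩
  have hA : IsPreconnected ((fun z : ℂ => z ^ 2) ⁻¹' (closedBall 0 1 \ D)) := by
    exact isPreconnected_preimage_of_isOpenMap_of_isClosedMap (x := 0)
      (Complex.isOpenQuotientMap_pow 2).isOpenMap (isClosedMap_pow ℂ 2)
      hD.isPreconnected_closedBall_diff (by simpa using h0) (by simp)
  rw [hcompl] at hp_compl ⊢
  exact isPreconnected_union_of_nonempty_inter_closure hA
    (image_neg_eq_neg (α := ℂ) ▸ hpre.image _ continuous_neg.continuousOn)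
    ⟨p, hp_compl.resolve_right hp.2, hp.1⟩

lemma hasDerivAt_sqrt (hD : IsOpen D) (hs : ContinuousOn s D) (hsq : ∀ z ∈ D, s z ^ 2 = z)
    (h0 : (0 : ℂ) ∉ D) (hy : y ∈ D) : HasDerivAt s (2 * s y)⁻¹ y := by
  refine HasDerivAt.of_local_left_inverse (f := fun z => z ^ 2) (hs.continuousAt (hD.mem_nhds hy))
    (by simpa using hasDerivAt_pow 2 (s y))
    (mul_ne_zero two_ne_zero (sqrt_ne_zero hsq h0 hy)) ?_
  filter_upwards [hD.mem_nhds hy] with z hz using hsq z hz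

end

end DiscDomain

section KoebeStep

/-- `f` maps `U` biholomorphically onto a disc domain, with inverse `g` and fixing `0`: the
competitors in Koebe's proof of the Riemann mapping theorem. -/
structure IsDiscEmbedding (U : Set ℂ) (f g : ℂ → ℂ) : Prop where
  differentiableOn : DifferentiableOn ℂ f U
  differentiableOn_inv : DifferentiableOn ℂ g (f '' U)
  leftInvOn : LeftInvOn g f U
  isDiscDomain_image : IsDiscDomain (f '' U)
  map_zero : f 0 = 0

/-- Koebe's self-map of the unit disc: squaring, normalised by disc automorphisms to fix `0`. -/
def koebeMap (β z : ℂ) : ℂ := blaschke (β ^ 2) (blaschke (-β) z ^ 2)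

variable {D U : Set ℂ} {f g h k : ℂ → ℂ} {w β z : ℂ}

lemma IsDiscEmbedding.id (hU : IsDiscDomain U) : IsDiscEmbedding U id id where
  differentiableOn := differentiableOn_id
  differentiableOn_inv := differentiableOn_id
  leftInvOn _ _ := rfl
  isDiscDomain_image := by rwa [image_id]
  map_zero := rfl

lemma IsDiscEmbedding.comp (hh : IsDiscEmbedding (f '' U) h k) (hf : IsDiscEmbedding U f g) :
    IsDiscEmbedding U (h ∘ f) (g ∘ k) where
  differentiableOn := hh.differentiableOn.comp hf.differentiableOn (mapsTo_image f U)
  differentiableOn_inv := by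
    rw [image_comp]
    exact hf.differentiableOn_inv.comp hh.differentiableOn_inv
      (mapsTo_image_iff.2 fun y hy => by rwa [Function.comp_apply, hh.leftInvOn hy])
  leftInvOn := hf.leftInvOn.comp hh.leftInvOn (mapsTo_image f U)
  isDiscDomain_image := image_comp h f U ▸ hh.isDiscDomain_image
  map_zero := by rw [Function.comp_apply, hf.map_zero, hh.map_zero]

lemma differentiableAt_koebeMap (hβ : ‖β‖ < 1) (hz : ‖z‖ ≤ 1) :
    DifferentiableAt ℂ (koebeMap β) z := by
  have hβ' : ‖-β‖ < 1 := by rwa [norm_neg]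
  have hβ2 : ‖β ^ 2‖ < 1 := by rwa [norm_pow, sq_lt_one_iff₀ (norm_nonneg β)]
  have hsq : ‖blaschke (-β) z ^ 2‖ ≤ 1 := by
    rw [norm_pow, sq_le_one_iff₀ (norm_nonneg _)]
    exact norm_blaschke_le_one hβ' hz
  exact (hasDerivAt_blaschke hβ2 hsq).differentiableAt.comp z
    ((hasDerivAt_blaschke hβ' hz).differentiableAt.pow 2)

lemma hasDerivAt_koebeMap_zero (hβ : ‖β‖ < 1) :
    HasDerivAt (koebeMap β) (2 * β / (1 + ‖β‖ ^ 2)) 0 := by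
  have hβ2 : ‖β ^ 2‖ < 1 := by rwa [norm_pow, sq_lt_one_iff₀ (norm_nonneg β)]
  have hzero : blaschke (-β) 0 = β := by simp [blaschke]
  have hinner := (hasDerivAt_blaschke (w := -β) (y := 0) (by rwa [norm_neg]) (by simp)).pow 2
  have houter := hasDerivAt_blaschke hβ2 hβ2.le
  refine (HasDerivAt.comp_of_eq 0 houter hinner (by rw [Pi.pow_apply, hzero])).congr_deriv ?_
  have hne : (1 - ‖β‖ ^ 2 : ℂ) ≠ 0 := by
    exact_mod_cast (sub_pos.2 ((sq_lt_one_iff₀ (norm_nonneg β)).2 hβ)).ne'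
  have hne' : (1 + ‖β‖ ^ 2 : ℂ) ≠ 0 := by
    exact_mod_cast (add_pos_of_pos_of_nonneg one_pos (sq_nonneg ‖β‖)).ne'
  have hconj : (1 - conj (β ^ 2) * β ^ 2 : ℂ) = (1 - ‖β‖ ^ 2) * (1 + ‖β‖ ^ 2) := by
    rw [Complex.conj_mul', norm_pow]
    push_cast
    ring
  simp only [hzero, hconj, norm_neg, norm_pow, mul_zero, sub_zero, one_pow, div_one,
    Complex.ofReal_pow]
  field_simp
  ring

theorem IsDiscDomain.exists_isDiscEmbedding_koebeMap (hD : IsDiscDomain D) (h0 : (0 : ℂ) ∈ D)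
    (hw : ‖w‖ < 1) (hwD : w ∉ D) : ∃ β h, β ^ 2 = -w ∧ IsDiscEmbedding D h (koebeMap β) := by
  have hD_le : ∀ y ∈ D, ‖y‖ ≤ 1 := fun y hy => (mem_ball_zero_iff.1 (hD.subset_ball hy)).le
  have hD₁ := hD.image_blaschke hw
  have h0D₁ : (0 : ℂ) ∉ blaschke w '' D := by
    rintro ⟨y, hy, hyw⟩
    rw [← blaschke_neg_blaschke hw (hD_le y hy), hyw] at hy
    exact hwD (by simpa [blaschke] using hy)
  obtain ⟨s, hs, hsq⟩ := hD₁.exists_continuousOn_sq_eq h0D₁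
  have hD₂ := hD₁.image_sqrt h0D₁ (Nonempty.image _ ⟨0, h0⟩) hs hsq
  have hs_lt : ∀ y ∈ D, ‖s (blaschke w y)‖ < 1 := fun y hy =>
    mem_ball_zero_iff.1 (hD₂.subset_ball (mem_image_of_mem s (mem_image_of_mem _ hy)))
  obtain ⟨β, hβ⟩ : ∃ β, s (blaschke w 0) = β := ⟨_, rfl⟩
  have hβ_lt : ‖β‖ < 1 := hβ ▸ hs_lt 0 h0
  have hβ_sq : β ^ 2 = -w := by
    rw [← hβ, hsq _ (mem_image_of_mem _ h0)]
    simp [blaschke]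
  let h : ℂ → ℂ := blaschke β ∘ s ∘ blaschke w
  have hdiff : ∀ y ∈ D, DifferentiableAt ℂ h y := fun y hy =>
    (hasDerivAt_blaschke hβ_lt (hs_lt y hy).le).differentiableAt.comp y
      ((hasDerivAt_sqrt hD₁.isOpen hs hsq h0D₁ (mem_image_of_mem _ hy)).differentiableAt.comp y
        (hasDerivAt_blaschke hw (hD_le y hy)).differentiableAt)
  have hdisc : IsDiscDomain (h '' D) := by
    simpa only [h, image_comp] using hD₂.image_blaschke hβ_lt
  refine ⟨β, h, hβ_sq, fun y hy => (hdiff y hy).differentiableWithinAt, fun z hz =>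
    (differentiableAt_koebeMap hβ_lt (mem_ball_zero_iff.1
      (hdisc.subset_ball hz)).le).differentiableWithinAt, fun y hy => ?_, hdisc, ?_⟩
  · simp only [h, Function.comp_apply, koebeMap]
    rw [blaschke_neg_blaschke hβ_lt (hs_lt y hy).le, hsq _ (mem_image_of_mem _ hy), hβ_sq,
      blaschke_neg_blaschke hw (hD_le y hy)]
  · simp only [h, Function.comp_apply, hβ]
    rw [blaschke, sub_self, zero_div]

lemma IsDiscEmbedding.norm_deriv_zero_of_koebeMap (hh : IsDiscEmbedding D h (koebeMap β))
    (hD : D ∈ 𝓝 0) (hβ : ‖β‖ < 1) : ‖deriv h 0‖ = (1 + ‖β‖ ^ 2) / (2 * ‖β‖) := by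
  have hderiv : 2 * β / (1 + ‖β‖ ^ 2) * deriv h 0 = 1 := by
    refine ((HasDerivAt.comp_of_eq 0 (hasDerivAt_koebeMap_zero hβ)
      (hh.differentiableOn.differentiableAt hD).hasDerivAt hh.map_zero.symm).congr_of_eventuallyEq
      ?_).unique (hasDerivAt_id 0)
    filter_upwards [hD] with y hy using (hh.leftInvOn hy).symm
  have hβ_ne : ‖β‖ ≠ 0 := fun h => by simp [norm_eq_zero.1 h] at hderiv
  have hden : ‖(1 + ‖β‖ ^ 2 : ℂ)‖ = 1 + ‖β‖ ^ 2 := by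
    exact_mod_cast Complex.norm_of_nonneg (by positivity : 0 ≤ 1 + ‖β‖ ^ 2)
  have hnorm := congrArg norm hderiv
  rw [norm_mul, norm_div, hden, norm_mul, Complex.norm_ofNat, norm_one] at hnorm
  field_simp at hnorm ⊢
  exact hnorm

lemma IsDiscEmbedding.exists_mul_norm_deriv_le (hf : IsDiscEmbedding U f g) (hU : U ∈ 𝓝 0) {ρ : ℝ}
    (hρ0 : 0 < ρ) (hρ1 : ρ < 1) (hw : ‖w‖ < ρ ^ 2) (hwU : w ∉ f '' U) :
    ∃ h k, IsDiscEmbedding U h k ∧ (1 + ρ ^ 2) / (2 * ρ) * ‖deriv f 0‖ ≤ ‖deriv h 0‖ := by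
  have h0 : (0 : ℂ) ∈ f '' U := ⟨0, mem_of_mem_nhds hU, hf.map_zero⟩
  have hnhds := hf.isDiscDomain_image.isOpen.mem_nhds h0
  obtain ⟨β, h, hβ, hh⟩ := hf.isDiscDomain_image.exists_isDiscEmbedding_koebeMap h0
    (hw.trans (by nlinarith)) hwU
  have hβ_norm : ‖β‖ ^ 2 = ‖w‖ := by rw [← norm_pow, hβ, norm_neg]
  have hβ_pos : 0 < ‖β‖ := norm_pos_iff.2 fun hzero => hwU (by
    rw [hzero, zero_pow two_ne_zero, zero_eq_neg] at hβ
    rwa [hβ])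
  have hβρ : ‖β‖ < ρ := lt_of_pow_lt_pow_left₀ 2 hρ0.le (hβ_norm ▸ hw)
  refine ⟨h ∘ f, _, hh.comp hf, ?_⟩
  rw [deriv_comp, hf.map_zero, norm_mul, hh.norm_deriv_zero_of_koebeMap hnhds (hβρ.trans hρ1)]
  · gcongr ?_ * _
    rw [div_le_div_iff₀ (by positivity) (by positivity)]
    nlinarith [mul_nonneg (sub_nonneg.2 hβρ.le) (by nlinarith : 0 ≤ 1 - ‖β‖ * ρ)]
  · exact hf.map_zero.symm ▸ hh.differentiableOn.differentiableAt hnhds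
  · exact hf.differentiableOn.differentiableAt hU

theorem IsDiscDomain.exists_isDiscEmbedding_ball_subset_image (hU : IsDiscDomain U)
    (h0 : (0 : ℂ) ∈ U) {ρ : ℝ} (hρ0 : 0 < ρ) (hρ1 : ρ < 1) :
    ∃ f g, IsDiscEmbedding U f g ∧ ball 0 (ρ ^ 2) ⊆ f '' U := by
  let S : Set ℝ := {x | ∃ f g, IsDiscEmbedding U f g ∧ x = ‖deriv f 0‖}
  have hbdd : BddAbove S := by
    obtain ⟨r, hr, hrU⟩ := Metric.isOpen_iff.1 hU.isOpen 0 h0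
    refine ⟨1 / r, ?_⟩
    rintro _ ⟨f, g, hf, rfl⟩
    refine Complex.norm_deriv_le_div_of_mapsTo_ball (hf.differentiableOn.mono hrU)
      (fun z hz => ?_) hr
    rw [hf.map_zero]
    exact ball_subset_closedBall (hf.isDiscDomain_image.subset_ball (mem_image_of_mem f (hrU hz)))
  have h1S : (1 : ℝ) ∈ S := ⟨id, id, .id hU, by simp⟩
  have hsup : 1 ≤ sSup S := le_csSup hbdd h1S
  have hκ : 1 < (1 + ρ ^ 2) / (2 * ρ) := by
    rw [one_lt_div (by positivity)]
    nlinarith [sq_pos_of_pos (sub_pos.2 hρ1)]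
  obtain ⟨_, ⟨f, g, hf, rfl⟩, hlt⟩ := exists_lt_of_lt_csSup ⟨1, h1S⟩
    (div_lt_self (by linarith) hκ : sSup S / _ < sSup S)
  refine ⟨f, g, hf, fun w hw => by_contra fun hwU => ?_⟩
  obtain ⟨h, k, hh, hle⟩ := hf.exists_mul_norm_deriv_le (hU.isOpen.mem_nhds h0) hρ0 hρ1
    (mem_ball_zero_iff.1 hw) hwU
  refine (le_csSup hbdd (⟨h, k, hh, rfl⟩ : ‖deriv h 0‖ ∈ S)).not_gt (lt_of_lt_of_le ?_ hle)
  rwa [mul_comm, ← div_lt_iff₀ (by linarith)]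

end KoebeStep

section RiemannMapping

variable {ι : Type*} {F : ι → ℂ → ℂ} {f g : ℂ → ℂ} {U V : Set ℂ} {b : ℂ} {C : ℝ}

lemma tendstoLocallyUniformlyOn_of_eventually_norm_le {l : Filter ι} [l.NeBot]
    (hF : ∀ x ∈ V, ∀ᶠ p in l ×ˢ 𝓝 x, DifferentiableAt ℂ (F p.1) p.2 ∧ ‖F p.1 p.2‖ ≤ C)
    (hlim : ∀ x ∈ V, Tendsto (F · x) l (𝓝 (f x))) : TendstoLocallyUniformlyOn F f l V := by
  rw [Metric.tendstoLocallyUniformlyOn_iff]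
  intro ε hε x hx
  obtain ⟨P, hP, Q, hQ, hPQ⟩ := eventually_prod_iff.1 (hF x hx)
  obtain ⟨r, hr, hrQ⟩ := Metric.eventually_nhds_iff_ball.1 hQ
  have hlip : ∀ᶠ n in l, ∀ y ∈ ball x r, dist (F n y) (F n x) ≤ 2 * C / r * dist y x := by
    filter_upwards [hP] with n hn y hy
    refine Complex.dist_le_div_mul_dist_of_mapsTo_ball
      (fun z hz => (hPQ hn (hrQ z hz)).1.differentiableWithinAt) (fun z hz => ?_) hy
    rw [mem_closedBall, dist_eq_norm]
    linarith [norm_sub_le (F n z) (F n x), (hPQ hn (hrQ z hz)).2,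
      (hPQ hn (hrQ x (mem_ball_self hr))).2]
  have hlip_lim : ∀ y ∈ V ∩ ball x r, dist (f y) (f x) ≤ 2 * C / r * dist y x := fun y hy =>
    le_of_tendsto ((hlim y hy.1).dist (hlim x hx)) (hlip.mono fun n hn => hn y hy.2)
  have hsmall : ∀ᶠ y in 𝓝 x, 2 * C / r * dist y x < ε / 3 :=
    (tendsto_const_nhds.mul (tendsto_id.dist tendsto_const_nhds)).eventually_lt_const
      (by simpa using hε)
  refine ⟨V ∩ (ball x r ∩ {y | 2 * C / r * dist y x < ε / 3}),
    inter_mem_nhdsWithin _ (inter_mem (ball_mem_nhds x hr) hsmall), ?_⟩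
  filter_upwards [hlip, Metric.tendsto_nhds.1 (hlim x hx) (ε / 3) (by positivity)]
    with n hn hnx y ⟨hyV, hyr, hy⟩
  calc dist (f y) (F n y) ≤ dist (f y) (f x) + dist (f x) (F n x) + dist (F n x) (F n y) :=
        dist_triangle4 _ _ _ _
    _ < ε := by
      rw [dist_comm (f x), dist_comm (F n x) (F n y)]
      linarith [hlip_lim y ⟨hyV, hyr⟩, hn y hyr, hy.out]

/-- Montel's theorem, with an ultrafilter in place of a subsequence. -/
theorem exists_tendstoLocallyUniformlyOn_of_eventually_norm_le (l : Ultrafilter ι) (hV : IsOpen V)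
    (hF : ∀ x ∈ V, ∀ᶠ p in ↑l ×ˢ 𝓝 x, DifferentiableAt ℂ (F p.1) p.2 ∧ ‖F p.1 p.2‖ ≤ C) :
    ∃ f, DifferentiableOn ℂ f V ∧ (∀ x ∈ V, ‖f x‖ ≤ C) ∧ TendstoLocallyUniformlyOn F f l V := by
  have hlim : ∀ x ∈ V, ∃ y, ‖y‖ ≤ C ∧ Tendsto (F · x) l (𝓝 y) := by
    intro x hx
    have hC : ∀ᶠ n in (l : Filter ι), F n x ∈ closedBall 0 C :=
      (hF x hx).curry.mono fun n hn => mem_closedBall_zero_iff.2 hn.self_of_nhds.2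
    obtain ⟨y, hy, hle⟩ := (isCompact_closedBall (0 : ℂ) C).ultrafilter_le_nhds (l.map (F · x))
      (le_principal_iff.2 hC)
    exact ⟨y, mem_closedBall_zero_iff.1 hy, hle⟩
  choose! f hfC hf using hlim
  have hloc := tendstoLocallyUniformlyOn_of_eventually_norm_le hF hf
  refine ⟨f, fun x hx => ?_, hfC, hloc⟩
  obtain ⟨P, hP, Q, hQ, hPQ⟩ := eventually_prod_iff.1 (hF x hx)
  obtain ⟨t, htQ, ht, hxt⟩ := _root_.eventually_nhds_iff.1 hQ
  have hdiff : DifferentiableOn ℂ f (t ∩ V) :=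
    (hloc.mono inter_subset_right).differentiableOn (hP.mono fun n hn y hy =>
      (hPQ hn (htQ y hy.1)).1.differentiableWithinAt) (ht.inter hV)
  exact (hdiff.differentiableAt ((ht.inter hV).mem_nhds ⟨hxt, hx⟩)).differentiableWithinAt

lemma le_norm_sub_of_forall_mem_sphere_le {r m : ℝ} {z : ℂ} (hr : 0 < r) (hm : 0 < m)
    (hf : ∀ y ∈ closedBall z r, DifferentiableAt ℂ f y ∧ f y ≠ b)
    (hsphere : ∀ y ∈ sphere z r, m ≤ ‖f y - b‖) : m ≤ ‖f z - b‖ := by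
  have hdiff : DiffContOnCl ℂ (fun y => (f y - b)⁻¹) (ball z r) := by
    refine DifferentiableOn.diffContOnCl fun y hy => ?_
    rw [closure_ball z hr.ne'] at hy
    exact (((hf y hy).1.sub_const b).inv (sub_ne_zero.2 (hf y hy).2)).differentiableWithinAt
  have hmax : ‖(f z - b)⁻¹‖ ≤ m⁻¹ := by
    refine Complex.norm_le_of_forall_mem_frontier_norm_le isBounded_ball hdiff (fun y hy => ?_)
      (subset_closure (mem_ball_self hr))
    rw [frontier_ball z hr.ne'] at hy
    rw [norm_inv]
    exact inv_anti₀ hm (hsphere y hy)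
  have hz := hf z (mem_closedBall_self hr.le)
  rwa [norm_inv, inv_le_inv₀ (norm_pos_iff.2 (sub_ne_zero.2 hz.2)) hm] at hmax

theorem eqOn_const_of_tendstoLocallyUniformlyOn_of_eventually_ne {l : Filter ι} [l.NeBot]
    (hV : IsOpen V) (hV' : IsPreconnected V) (hg : DifferentiableOn ℂ g V)
    (hlim : TendstoLocallyUniformlyOn F g l V)
    (hF : ∀ x ∈ V, ∀ᶠ p in l ×ˢ 𝓝 x, DifferentiableAt ℂ (F p.1) p.2 ∧ F p.1 p.2 ≠ b)
    {z : ℂ} (hz : z ∈ V) (hzb : g z = b) : EqOn g (fun _ => b) V := by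
  by_contra hne
  have hisolated : ∀ᶠ y in 𝓝[≠] z, g y ≠ b := by
    by_contra h
    exact hne ((hg.analyticOnNhd hV).eqOn_of_preconnected_of_frequently_eq analyticOnNhd_const
      hV' hz (not_eventually.1 h |>.mono fun _ => not_not.1))
  obtain ⟨P, hP, Q, hQ, hPQ⟩ := eventually_prod_iff.1 (hF z hz)
  obtain ⟨r, hr, hball⟩ := Metric.nhds_basis_closedBall.eventually_iff.1
    ((hV.eventually_mem hz).and (hQ.and (eventually_nhdsWithin_iff.1 hisolated)))
  obtain ⟨δ, hδ, hδs⟩ : ∃ δ > 0, ∀ y ∈ sphere z r, δ ≤ ‖g y - b‖ := by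
    refine (isCompact_sphere z r).exists_forall_le' (a := 0)
      ((hg.continuousOn.mono fun y hy => (hball (sphere_subset_closedBall hy)).1).sub
        continuousOn_const).norm fun y hy => norm_pos_iff.2 (sub_ne_zero.2 ?_)
    exact (hball (sphere_subset_closedBall hy)).2.2 (ne_of_mem_sphere hy hr.ne')
  have hunif := (tendstoLocallyUniformlyOn_iff_tendstoUniformlyOn_of_compact
    (isCompact_closedBall z r)).1 (hlim.mono fun y hy => (hball hy).1)
  obtain ⟨n, hn, hnP⟩ :=
    ((Metric.tendstoUniformlyOn_iff.1 hunif (δ / 2) (by positivity)).and hP).exists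
  have hle : δ / 2 ≤ ‖F n z - b‖ := by
    refine le_norm_sub_of_forall_mem_sphere_le hr (half_pos hδ)
      (fun y hy => hPQ hnP (hball hy).2.1) fun y hy => ?_
    have := hn y (sphere_subset_closedBall hy)
    rw [dist_eq_norm] at this
    linarith [hδs y hy, norm_sub_le_norm_sub_add_norm_sub (g y) (F n y) b]
  rw [← hzb, ← dist_eq_norm, dist_comm] at hle
  exact hle.not_gt (hn z (mem_closedBall_self hr.le))

lemma mapsTo_of_tendstoLocallyUniformlyOn {l : Filter ι} [l.NeBot] (hV : IsOpen V)
    (hV' : IsPreconnected V) (hg : DifferentiableOn ℂ g V)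
    (hlim : TendstoLocallyUniformlyOn F g l V)
    (hF : ∀ x ∈ V, ∀ᶠ p in l ×ˢ 𝓝 x, DifferentiableAt ℂ (F p.1) p.2 ∧ F p.1 p.2 ∈ U)
    {z : ℂ} (hz : z ∈ V) (hzU : g z ∈ U) : MapsTo g V U := by
  refine fun w hw => by_contra fun hwU => hwU ?_
  have hconst : g z = g w := eqOn_const_of_tendstoLocallyUniformlyOn_of_eventually_ne hV hV' hg
    hlim (fun x hx => (hF x hx).mono fun p hp => ⟨hp.1, ne_of_mem_of_not_mem hp.2 hwU⟩) hw rfl hz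
  exact hconst ▸ hzU

lemma mapsTo_ball_of_forall_norm_le (hU : IsOpen U) (hU' : IsPreconnected U)
    (hf : DifferentiableOn ℂ f U) (hle : ∀ x ∈ U, ‖f x‖ ≤ C) {z : ℂ} (hz : z ∈ U)
    (hlt : ‖f z‖ < C) : MapsTo f U (ball 0 C) := by
  refine fun x hx => mem_ball_zero_iff.2 ((hle x hx).lt_of_ne fun hxC => ?_)
  have hmax := Complex.norm_eqOn_of_isPreconnected_of_isMaxOn hU' hU hf hx
    (fun y hy => (hle y hy).trans_eq hxC.symm) hz
  exact hlt.ne (hmax.trans hxC)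

lemma IsDiscEmbedding.mapsTo_inv (hf : IsDiscEmbedding U f g) : MapsTo g (f '' U) U :=
  mapsTo_image_iff.2 fun x hx => by rwa [Function.comp_apply, hf.leftInvOn hx]

lemma IsDiscDomain.exists_seq_isDiscEmbedding (hU : IsDiscDomain U) (h0 : (0 : ℂ) ∈ U) :
    ∃ F G : ℕ → ℂ → ℂ, (∀ n, IsDiscEmbedding U (F n) (G n)) ∧
      ∀ z ∈ ball (0 : ℂ) 1, ∀ᶠ p in atTop ×ˢ 𝓝 z, p.2 ∈ F p.1 '' U := by
  have hρ : ∀ n : ℕ, 0 < 1 - 1 / ((n : ℝ) + 2) ∧ 1 - 1 / ((n : ℝ) + 2) < 1 := fun n => by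
    have : 1 / ((n : ℝ) + 2) < 1 := (div_lt_one (by positivity)).2 (by linarith)
    exact ⟨by linarith, sub_lt_self 1 (by positivity)⟩
  choose F G hFG hsub using fun n =>
    hU.exists_isDiscEmbedding_ball_subset_image h0 (hρ n).1 (hρ n).2
  refine ⟨F, G, hFG, fun z hz => ?_⟩
  have hlim : Tendsto (fun n : ℕ => (1 - 1 / ((n : ℝ) + 2)) ^ 2) atTop (𝓝 1) := by
    have : Tendsto (fun n : ℕ => 1 / ((n : ℝ) + 2)) atTop (𝓝 0) :=
      tendsto_const_nhds.div_atTop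
        (tendsto_atTop_add_const_right atTop 2 tendsto_natCast_atTop_atTop)
    simpa using (this.const_sub 1).pow 2
  obtain ⟨r, hzr, hr⟩ := exists_between (mem_ball_zero_iff.1 hz)
  filter_upwards [(hlim.eventually_const_lt hr).prod_mk
    (isOpen_ball.eventually_mem (mem_ball_zero_iff.2 hzr))] with p hp
  exact hsub p.1 (ball_subset_ball hp.1.le hp.2)

lemma leftInvOn_of_tendstoLocallyUniformlyOn {X Y ι : Type*} [UniformSpace X] [T2Space X]
    [TopologicalSpace Y] {l : Filter ι} [l.NeBot] {F : ι → X → Y} {G : ι → Y → X} {f : X → Y}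
    {g : Y → X} {S : Set X} {T : Set Y} (hT : IsOpen T)
    (hF : ∀ x ∈ S, Tendsto (F · x) l (𝓝 (f x))) (hG : TendstoLocallyUniformlyOn G g l T)
    (hg : ContinuousOn g T) (hf : MapsTo f S T) (hGF : ∀ x ∈ S, ∀ᶠ n in l, G n (F n x) = x) :
    LeftInvOn g f S := fun x hx =>
  tendsto_nhds_unique (hG.tendsto_comp (hg _ (hf hx)) (hf hx)
    (hT.nhdsWithin_eq (hf hx) ▸ hF x hx)) (tendsto_const_nhds.congr' (.symm (hGF x hx)))

theorem IsDiscDomain.exists_biholomorphic_ball (hU : IsDiscDomain U) (h0 : (0 : ℂ) ∈ U) :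
    ∃ φ ψ : ℂ → ℂ, DifferentiableOn ℂ φ (ball 0 1) ∧ DifferentiableOn ℂ ψ U ∧
      MapsTo φ (ball 0 1) U ∧ MapsTo ψ U (ball 0 1) ∧ InvOn ψ φ (ball 0 1) U := by
  obtain ⟨F, G, hFG, hbig⟩ := hU.exists_seq_isDiscEmbedding h0
  let l : Ultrafilter ℕ := hyperfilter ℕ
  replace hbig : ∀ z ∈ ball (0 : ℂ) 1, ∀ᶠ p in (l : Filter ℕ) ×ˢ 𝓝 z, p.2 ∈ F p.1 '' U :=
    fun z hz => (hbig z hz).filter_mono (prod_mono_left _ Nat.hyperfilter_le_atTop)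
  have hbig_self : ∀ z ∈ ball (0 : ℂ) 1, ∀ᶠ n in (l : Filter ℕ), z ∈ F n '' U := fun z hz =>
    (hbig z hz).curry.mono fun n hn => hn.self_of_nhds
  have hG_diff : ∀ n, ∀ z ∈ F n '' U, DifferentiableAt ℂ (G n) z := fun n z hz =>
    (hFG n).differentiableOn_inv.differentiableAt ((hFG n).isDiscDomain_image.isOpen.mem_nhds hz)
  obtain ⟨f, hf, hf_le, hFf⟩ := exists_tendstoLocallyUniformlyOn_of_eventually_norm_le (F := F)
    (C := 1) l hU.isOpen fun x hx =>
      ((hU.isOpen.eventually_mem hx).prod_inr (l : Filter ℕ)).mono fun p hp =>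
      ⟨(hFG p.1).differentiableOn.differentiableAt (hU.isOpen.mem_nhds hp), (mem_ball_zero_iff.1
        ((hFG p.1).isDiscDomain_image.subset_ball (mem_image_of_mem _ hp))).le⟩
  obtain ⟨g, hg, -, hGg⟩ := exists_tendstoLocallyUniformlyOn_of_eventually_norm_le (F := G)
    (C := 1) l isOpen_ball fun z hz => (hbig z hz).mono fun p hp =>
      ⟨hG_diff p.1 _ hp, (mem_ball_zero_iff.1 (hU.subset_ball ((hFG p.1).mapsTo_inv hp))).le⟩
  have hf0 : f 0 = 0 := tendsto_nhds_unique (hFf.tendsto_at h0)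
    (tendsto_const_nhds.congr fun n => (hFG n).map_zero.symm)
  have hG0 : ∀ n, G n 0 = 0 := fun n => by simpa [(hFG n).map_zero] using (hFG n).leftInvOn h0
  have hg0 : g 0 = 0 := tendsto_nhds_unique (hGg.tendsto_at (mem_ball_self one_pos))
    (tendsto_const_nhds.congr fun n => (hG0 n).symm)
  have hf_maps : MapsTo f U (ball 0 1) :=
    mapsTo_ball_of_forall_norm_le hU.isOpen hU.isPreconnected hf hf_le h0 (by simp [hf0])
  have hg_maps : MapsTo g (ball 0 1) U :=
    mapsTo_of_tendstoLocallyUniformlyOn isOpen_ball (convex_ball 0 1).isPreconnected hg hGg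
      (fun z hz => (hbig z hz).mono fun p hp => ⟨hG_diff p.1 _ hp, (hFG p.1).mapsTo_inv hp⟩)
      (mem_ball_self one_pos) (hg0.symm ▸ h0)
  refine ⟨g, f, hg, hf, hg_maps, hf_maps,
    leftInvOn_of_tendstoLocallyUniformlyOn hU.isOpen (fun z hz => hGg.tendsto_at hz) hFf
      hf.continuousOn hg_maps fun z hz => ?_,
    leftInvOn_of_tendstoLocallyUniformlyOn isOpen_ball (fun x hx => hFf.tendsto_at hx) hGg
      hg.continuousOn hf_maps fun x hx => .of_forall fun n => (hFG n).leftInvOn hx⟩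
  filter_upwards [hbig_self z hz]
  rintro n ⟨x, hx, rfl⟩
  rw [(hFG n).leftInvOn hx]

end RiemannMapping

section Diffeomorphisms

variable {E F G : Type*} [NormedAddCommGroup E] [NormedSpace ℝ E] [NormedAddCommGroup F]
  [NormedSpace ℝ F] [NormedAddCommGroup G] [NormedSpace ℝ G]

/-- `f` restricts to a `C^∞` diffeomorphism from the open set `S` onto the open set `T`, with
inverse `g`. Both maps are total functions; their values off `S` and `T` are irrelevant. -/
structure IsDiffeoOn (f : E → F) (g : F → E) (S : Set E) (T : Set F) : Prop where
  isOpen_source : IsOpen S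
  isOpen_target : IsOpen T
  mapsTo : MapsTo f S T
  mapsTo_inv : MapsTo g T S
  invOn : InvOn g f S T
  contDiffOn : ContDiffOn ℝ ∞ f S
  contDiffOn_inv : ContDiffOn ℝ ∞ g T

namespace IsDiffeoOn

variable {f : E → F} {g : F → E} {S S' : Set E} {T T' : Set F} {f₂ : F → G} {g₂ : G → F}
  {U : Set G} {x : E}

lemma symm (h : IsDiffeoOn f g S T) : IsDiffeoOn g f T S :=
  ⟨h.isOpen_target, h.isOpen_source, h.mapsTo_inv, h.mapsTo, h.invOn.symm, h.contDiffOn_inv,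
    h.contDiffOn⟩

lemma trans (h : IsDiffeoOn f g S T) (h₂ : IsDiffeoOn f₂ g₂ T U) :
    IsDiffeoOn (f₂ ∘ f) (g ∘ g₂) S U :=
  ⟨h.isOpen_source, h₂.isOpen_target, h₂.mapsTo.comp h.mapsTo, h.mapsTo_inv.comp h₂.mapsTo_inv,
    h.invOn.comp h₂.invOn h.mapsTo h₂.mapsTo_inv, h₂.contDiffOn.comp h.contDiffOn h.mapsTo,
    h.contDiffOn_inv.comp h₂.contDiffOn_inv h₂.mapsTo_inv⟩

lemma mono (h : IsDiffeoOn f g S T) (hS' : IsOpen S') (hT' : IsOpen T') (hS : S' ⊆ S) (hT : T' ⊆ T)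
    (hf : MapsTo f S' T') (hg : MapsTo g T' S') : IsDiffeoOn f g S' T' :=
  ⟨hS', hT', hf, hg, h.invOn.mono hS hT, h.contDiffOn.mono hS, h.contDiffOn_inv.mono hT⟩

lemma contDiffAt (h : IsDiffeoOn f g S T) (hx : x ∈ S) : ContDiffAt ℝ ∞ f x :=
  h.contDiffOn.contDiffAt (h.isOpen_source.mem_nhds hx)

lemma differentiableAt (h : IsDiffeoOn f g S T) (hx : x ∈ S) : DifferentiableAt ℝ f x :=
  (h.contDiffAt hx).differentiableAt (by simp)

lemma fderiv_inv_comp_fderiv (h : IsDiffeoOn f g S T) (hx : x ∈ S) :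
    (fderiv ℝ g (f x)).comp (fderiv ℝ f x) = .id ℝ E := by
  rw [← fderiv_comp x (h.symm.differentiableAt (h.mapsTo hx)) (h.differentiableAt hx), ← fderiv_id]
  exact (h.invOn.1.eqOn.eventuallyEq_of_mem (h.isOpen_source.mem_nhds hx)).fderiv_eq

lemma exists_hasFDerivAt_equiv (h : IsDiffeoOn f g S T) (hx : x ∈ S) :
    ∃ L : E ≃L[ℝ] F, HasFDerivAt f (L : E →L[ℝ] F) x := by
  have hgf := h.fderiv_inv_comp_fderiv hx
  have hfg := h.symm.fderiv_inv_comp_fderiv (h.mapsTo hx)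
  rw [h.invOn.1 hx] at hfg
  exact ⟨.equivOfInverse (fderiv ℝ f x) (fderiv ℝ g (f x)) (DFunLike.congr_fun hgf)
    (DFunLike.congr_fun hfg), (h.differentiableAt hx).hasFDerivAt⟩

lemma fderiv_comp_eq_zero_iff (h : IsDiffeoOn f g S T) (hx : x ∈ S) {u : F → G}
    (hu : DifferentiableAt ℝ u (f x)) :
    fderiv ℝ (u ∘ f) x = 0 ↔ fderiv ℝ u (f x) = 0 := by
  obtain ⟨L, hL⟩ := h.exists_hasFDerivAt_equiv hx
  rw [fderiv_comp x hu hL.differentiableAt, hL.fderiv]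
  refine ⟨fun h0 => ?_, fun h0 => by rw [h0, ContinuousLinearMap.zero_comp]⟩
  ext v
  simpa using DFunLike.congr_fun h0 (L.symm v)

end IsDiffeoOn

lemma isDiffeoOn_continuousLinearEquiv (L : E ≃L[ℝ] F) : IsDiffeoOn L L.symm univ univ :=
  ⟨isOpen_univ, isOpen_univ, mapsTo_univ _ _, mapsTo_univ _ _,
    ⟨fun x _ => L.symm_apply_apply x, fun y _ => L.apply_symm_apply y⟩, L.contDiff.contDiffOn,
    L.symm.contDiff.contDiffOn⟩

end Diffeomorphisms

section Germs

variable {E F : Type*} [NormedAddCommGroup E] [NormedSpace ℝ E] [FiniteDimensional ℝ E]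
  [NormedAddCommGroup F] [NormedSpace ℝ F] {s : Set E}

lemma exists_isDiffeoOn_id_add_of_lipschitzWith {e : E → E} {c : ℝ≥0} (he : ContDiff ℝ ∞ e)
    (hlip : LipschitzWith c e) (hc : c < 1) :
    ∃ g, IsDiffeoOn (fun x => x + e x) g univ univ := by
  have : CompleteSpace E := FiniteDimensional.complete ℝ E
  have happrox : ApproximatesLinearOn (fun x => x + e x)
      (ContinuousLinearEquiv.refl ℝ E : E →L[ℝ] E) univ c := by
    intro x _ y _
    simpa [add_sub_add_comm] using hlip.norm_sub_le x y
  have hsmall : Subsingleton E ∨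
      c < ‖((ContinuousLinearEquiv.refl ℝ E).symm : E →L[ℝ] E)‖₊⁻¹ := by
    rcases subsingleton_or_nontrivial E with hE | hE
    · exact .inl hE
    · have hone : ‖((ContinuousLinearEquiv.refl ℝ E).symm : E →L[ℝ] E)‖₊ = 1 :=
        NNReal.eq ContinuousLinearMap.norm_id
      exact .inr (by rwa [hone, inv_one])
  have hderiv (x : E) : ∃ L : E ≃L[ℝ] E, HasFDerivAt (fun x => x + e x) (L : E →L[ℝ] E) x := by
    have hnorm : ‖-fderiv ℝ e x‖ < 1 := by
      rw [norm_neg]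
      exact (norm_fderiv_le_of_lipschitz ℝ hlip).trans_lt hc
    refine ⟨.ofUnit (Units.oneSub _ hnorm),
      ((hasFDerivAt_id x).add (he.differentiable (by simp) x).hasFDerivAt).congr_fderiv ?_⟩
    ext v
    simp [ContinuousLinearEquiv.ofUnit]
  choose L hL using hderiv
  have hsmooth : ContDiff ℝ ∞ fun x => x + e x := contDiff_id.add he
  let Φ := happrox.toHomeomorph _ hsmall
  exact ⟨Φ.symm, isOpen_univ, isOpen_univ, mapsTo_univ _ _, mapsTo_univ _ _,
    ⟨fun x _ => Φ.symm_apply_apply x, fun y _ => Φ.apply_symm_apply y⟩, hsmooth.contDiffOn,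
    (Φ.contDiff_symm hL hsmooth).contDiffOn⟩

variable (E) in
lemma exists_lipschitzWith_contDiff_eventuallyEq_id :
    ∃ C : ℝ≥0, ∀ r > (0 : ℝ), ∃ ρ : E → E, ContDiff ℝ ∞ ρ ∧ LipschitzWith C ρ ∧
      (∀ x, ρ x ∈ ball 0 r) ∧ ρ =ᶠ[𝓝 0] id := by
  let b : ContDiffBump (0 : E) := ⟨2⁻¹, 1, by norm_num, by norm_num⟩
  have hsmooth : ContDiff ℝ ∞ fun x => b x • x := b.contDiff.smul contDiff_id
  obtain ⟨C, hC⟩ := hsmooth.lipschitzWith_of_hasCompactSupport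
    (b.hasCompactSupport.smul_right) (by simp)
  have hnorm (x : E) : ‖b x • x‖ < 1 := by
    by_cases hx : ‖x‖ < 1
    · rw [norm_smul, Real.norm_of_nonneg b.nonneg]
      exact (mul_le_of_le_one_left (norm_nonneg x) b.le_one).trans_lt hx
    · rw [b.zero_of_le_dist (by simpa using hx), zero_smul, norm_zero]
      exact one_pos
  refine ⟨C, fun r hr => ⟨fun x => r • (b (r⁻¹ • x) • (r⁻¹ • x)),
    (hsmooth.comp (contDiff_const_smul r⁻¹)).const_smul r, .of_dist_le_mul fun x y => ?_,
    fun x => ?_, ?_⟩⟩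
  · have hxy := hC.dist_le_mul (r⁻¹ • x) (r⁻¹ • y)
    rw [dist_smul₀ r⁻¹] at hxy
    rw [dist_smul₀ r]
    calc ‖r‖ * dist (b (r⁻¹ • x) • r⁻¹ • x) (b (r⁻¹ • y) • r⁻¹ • y)
        ≤ ‖r‖ * (C * (‖r⁻¹‖ * dist x y)) := by gcongr; exact hxy
      _ = C * dist x y := by
        rw [norm_inv]
        have hr' : ‖r‖ ≠ 0 := norm_ne_zero_iff.2 hr.ne'
        field
  · rw [mem_ball_zero_iff, norm_smul, Real.norm_of_nonneg hr.le]
    exact mul_lt_of_lt_one_right hr (hnorm _)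
  · have hcont : Tendsto (fun x : E => r⁻¹ • x) (𝓝 0) (𝓝 0) := by
      simpa using (continuous_const_smul r⁻¹).tendsto (0 : E)
    filter_upwards [hcont.eventually b.eventuallyEq_one] with x hx
    rw [hx, Pi.one_apply, one_smul, smul_inv_smul₀ hr.ne', id]

lemma exists_lipschitzWith_contDiff_eventuallyEq {h : E → F} {c : ℝ≥0} (hs : s ∈ 𝓝 0)
    (hh : ContDiffOn ℝ ∞ h s) (hderiv : fderiv ℝ h 0 = 0) (hc : 0 < c) :
    ∃ e : E → F, ContDiff ℝ ∞ e ∧ LipschitzWith c e ∧ e =ᶠ[𝓝 0] h := by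
  obtain ⟨C, hC⟩ := exists_lipschitzWith_contDiff_eventuallyEq_id E
  obtain ⟨t, ht, hlip⟩ := ((hh.contDiffAt hs).of_le
    (by simp)).exists_lipschitzOnWith_of_nnnorm_lt (c / (C + 1))
    (by rw [hderiv, nnnorm_zero]; positivity)
  obtain ⟨r, hr, hball⟩ := Metric.mem_nhds_iff.1 (inter_mem hs ht)
  obtain ⟨ρ, hρ, hρlip, hρball, hρid⟩ := hC r hr
  refine ⟨h ∘ ρ, hh.comp_contDiff hρ fun x => (hball (hρball x)).1, ?_, hρid.fun_comp h⟩
  have hcomp : LipschitzWith (c / (C + 1) * C) (h ∘ ρ) := lipschitzOnWith_univ.1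
    (hlip.comp hρlip.lipschitzOnWith fun x _ => (hball (hρball x)).2)
  refine hcomp.weaken ?_
  rw [div_mul_eq_mul_div, div_le_iff₀ (by positivity)]
  gcongr
  exact le_self_add

lemma exists_isDiffeoOn_univ_eventuallyEq {G : E → F} {L : E ≃L[ℝ] F} (hs : s ∈ 𝓝 0)
    (hG : ContDiffOn ℝ ∞ G s) (hL : HasFDerivAt G (L : E →L[ℝ] F) 0) :
    ∃ H H', IsDiffeoOn H H' univ univ ∧ H =ᶠ[𝓝 0] G := by
  have hderiv : HasFDerivAt (fun x => L.symm (G x) - x) (0 : E →L[ℝ] E) 0 := by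
    refine ((L.symm.hasFDerivAt.comp 0 hL).sub (hasFDerivAt_id 0)).congr_fderiv ?_
    ext v
    simp
  obtain ⟨e, he, hlip, heq⟩ := exists_lipschitzWith_contDiff_eventuallyEq (c := 2⁻¹) hs
    ((L.symm.contDiff.comp_contDiffOn hG).sub contDiffOn_id) hderiv.fderiv (by positivity)
  obtain ⟨g, hg⟩ := exists_isDiffeoOn_id_add_of_lipschitzWith he hlip
    (by rw [← NNReal.coe_lt_coe]; norm_num)
  have hL' : IsDiffeoOn L L.symm univ univ :=
    ⟨isOpen_univ, isOpen_univ, mapsTo_univ _ _, mapsTo_univ _ _,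
      ⟨fun x _ => L.symm_apply_apply x, fun y _ => L.apply_symm_apply y⟩, L.contDiff.contDiffOn,
      L.symm.contDiff.contDiffOn⟩
  refine ⟨_, _, hg.trans hL', ?_⟩
  filter_upwards [heq] with x hx
  simp [hx]

end Germs

section Collapse

open OpenPartialHomeomorph (univUnitBall)

section InnerProductSpace

variable {E : Type*} [NormedAddCommGroup E] [InnerProductSpace ℝ E]

lemma isDiffeoOn_univUnitBall :
    IsDiffeoOn (univUnitBall : E → E) univUnitBall.symm univ (ball 0 1) :=
  ⟨isOpen_univ, isOpen_ball, univUnitBall.mapsTo, univUnitBall.symm.mapsTo,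
    ⟨univUnitBall.leftInvOn, univUnitBall.rightInvOn⟩,
    OpenPartialHomeomorph.contDiff_univUnitBall.contDiffOn,
    OpenPartialHomeomorph.contDiffOn_univUnitBall_symm⟩

lemma isDiffeoOn_univUnitBall_compl_zero :
    IsDiffeoOn (univUnitBall : E → E) univUnitBall.symm {0}ᶜ (ball 0 1 \ {0}) := by
  have hN := isDiffeoOn_univUnitBall (E := E)
  refine hN.mono isOpen_compl_singleton (isOpen_ball.sdiff isClosed_singleton) (subset_univ _)
    sdiff_subset (fun z hz => ⟨hN.mapsTo trivial, fun h0 => hz ?_⟩) fun w hw h0 => hw.2 ?_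
  · rw [mem_singleton_iff, ← hN.invOn.1 (mem_univ z), h0,
      OpenPartialHomeomorph.univUnitBall_symm_apply_zero]
  · rw [mem_singleton_iff, ← hN.invOn.2 hw.1, h0, OpenPartialHomeomorph.univUnitBall_apply_zero]

-- The germ at `0` is corrected by conjugating `ψ` to a map near the origin of the whole space and
-- replacing that by a global diffeomorphism with the same germ.
lemma IsDiffeoOn.exists_eventuallyEq_id [FiniteDimensional ℝ E] {φ ψ : E → E} {U : Set E}
    (h : IsDiffeoOn φ ψ (ball 0 1) U) (hU : U ⊆ ball 0 1) (h0 : 0 ∈ U) :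
    ∃ Φ Ψ, IsDiffeoOn Φ Ψ (ball 0 1) U ∧ Φ =ᶠ[𝓝 0] id := by
  have hN := isDiffeoOn_univUnitBall (E := E)
  have hopen : IsOpen (univUnitBall ⁻¹' U : Set E) :=
    h.isOpen_target.preimage (OpenPartialHomeomorph.contDiff_univUnitBall (n := 0)).continuous
  have hmem : (0 : E) ∈ (univUnitBall ⁻¹' U : Set E) := by simpa using h0
  have hNU : IsDiffeoOn (univUnitBall : E → E) univUnitBall.symm (univUnitBall ⁻¹' U) U :=
    hN.mono hopen h.isOpen_target (subset_univ _) hU (mapsTo_preimage _ _)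
      fun z hz => by rwa [mem_preimage, hN.invOn.2 (hU hz)]
  have hG := (hNU.trans h.symm).trans hN.symm
  obtain ⟨L, hL⟩ := hG.exists_hasFDerivAt_equiv hmem
  obtain ⟨H, H', hH, hHG⟩ :=
    exists_isDiffeoOn_univ_eventuallyEq (hopen.mem_nhds hmem) hG.contDiffOn hL
  refine ⟨_, _, ((hN.symm.trans hH).trans hN).trans h, ?_⟩
  have hlim : Tendsto (univUnitBall.symm : E → E) (𝓝 0) (𝓝 0) := by
    simpa using (hN.symm.contDiffAt (mem_ball_self one_pos)).continuousAt.tendsto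
  filter_upwards [hlim.eventually hHG, h.isOpen_target.mem_nhds h0] with z hz hzU
  simp only [Function.comp_apply] at hz ⊢
  rw [hz, hN.invOn.2 (hU hzU), hN.invOn.2 (h.mapsTo_inv hzU), h.invOn.2 hzU, id]

end InnerProductSpace

lemma isPreconnected_of_isPreconnected_image {X Y : Type*} [TopologicalSpace X]
    [TopologicalSpace Y] [T2Space Y] {f : X → Y} {s : Set X} (hs : IsCompact s)
    (hf : ContinuousOn f s) (hfs : IsPreconnected (f '' s))
    (hfib : ∀ y ∈ f '' s, IsPreconnected (s ∩ f ⁻¹' {y})) : IsPreconnected s := by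
  rw [isPreconnected_closed_iff] at hfs ⊢
  intro t t' ht ht' hcover hst hst'
  have hclosed {u : Set X} (hu : IsClosed u) : IsClosed (f '' (s ∩ u)) :=
    ((hs.inter_right hu).image_of_continuousOn (hf.mono inter_subset_left)).isClosed
  obtain ⟨y, hys, ⟨x, ⟨hxs, hxt⟩, hxy⟩, ⟨x', ⟨hxs', hxt'⟩, hxy'⟩⟩ :=
    hfs _ _ (hclosed ht) (hclosed ht')
      (by rw [← image_union, ← inter_union_distrib_left, inter_eq_left.2 hcover])
      (by rwa [inter_eq_right.2 (image_mono inter_subset_left), image_nonempty])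
      (by rwa [inter_eq_right.2 (image_mono inter_subset_left), image_nonempty])
  obtain ⟨z, hz, hztt'⟩ := isPreconnected_closed_iff.1 (hfib y hys) t t' ht ht'
    (inter_subset_left.trans hcover) ⟨x, ⟨hxs, hxy⟩, hxt⟩ ⟨x', ⟨hxs', hxy'⟩, hxt'⟩
  exact ⟨z, hz.1, hztt'⟩

/-- The map which turns the closed unit disc inside out, collapsing the unit circle to the point
`a` and sending the centre to infinity. With the convention `0⁻¹ = 0` its value at the centre
is `a`. -/
def collapseCircle (a w : ℂ) : ℂ := a + √(1 - ‖w‖ ^ 2) • w⁻¹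

variable {a w : ℂ} {K : Set ℂ}

lemma collapseCircle_eq_add_inv (a w : ℂ) :
    collapseCircle a w = a + (univUnitBall.symm w)⁻¹ := by
  rw [collapseCircle, OpenPartialHomeomorph.univUnitBall_symm_apply, Complex.real_smul,
    Complex.real_smul, mul_inv, Complex.ofReal_inv, inv_inv]

lemma collapseCircle_of_mem_sphere (hw : w ∈ sphere 0 1) : collapseCircle a w = a := by
  simp [collapseCircle, mem_sphere_zero_iff_norm.1 hw]

lemma continuousOn_collapseCircle (a : ℂ) : ContinuousOn (collapseCircle a) {0}ᶜ :=
  continuousOn_const.add <| (by fun_prop : Continuous fun w : ℂ => √(1 - ‖w‖ ^ 2)).continuousOn.smul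
    (continuousOn_id.inv₀ fun _ hw => hw)

lemma isDiffeoOn_collapseCircle (a : ℂ) :
    IsDiffeoOn (collapseCircle a) (fun z => univUnitBall (z - a)⁻¹) (ball 0 1 \ {0}) {a}ᶜ := by
  have hinv : IsDiffeoOn (Inv.inv : ℂ → ℂ) Inv.inv {0}ᶜ {0}ᶜ :=
    ⟨isOpen_compl_singleton, isOpen_compl_singleton, fun _ => inv_ne_zero, fun _ => inv_ne_zero,
      ⟨fun z _ => inv_inv z, fun z _ => inv_inv z⟩, contDiffOn_inv ℝ, contDiffOn_inv ℝ⟩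
  have hadd : IsDiffeoOn (fun z : ℂ => a + z) (fun z => z - a) {0}ᶜ {a}ᶜ :=
    ⟨isOpen_compl_singleton, isOpen_compl_singleton, fun z hz => by simpa using hz,
      fun z hz => sub_ne_zero.2 hz, ⟨fun z _ => by simp, fun z _ => by simp⟩, by fun_prop,
      by fun_prop⟩
  rw [funext (collapseCircle_eq_add_inv a)]
  exact (isDiffeoOn_univUnitBall_compl_zero.symm.trans hinv).trans hadd

lemma tendsto_collapseCircle_cobounded (a : ℂ) :
    Tendsto (collapseCircle a) (𝓝[≠] 0) (Bornology.cobounded ℂ) := by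
  have hN := isDiffeoOn_univUnitBall (E := ℂ)
  have hlim : Tendsto (univUnitBall.symm : ℂ → ℂ) (𝓝[≠] 0) (𝓝[≠] 0) := by
    refine tendsto_nhdsWithin_iff.2 ⟨?_, ?_⟩
    · exact (by simpa using (hN.symm.contDiffAt (mem_ball_self one_pos)).continuousAt.tendsto :
        Tendsto univUnitBall.symm (𝓝 (0 : ℂ)) (𝓝 0)).mono_left nhdsWithin_le_nhds
    · filter_upwards [self_mem_nhdsWithin, mem_nhdsWithin_of_mem_nhds (ball_mem_nhds 0 one_pos)]
        with w hw hwball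
      exact isDiffeoOn_univUnitBall_compl_zero.mapsTo_inv ⟨hwball, hw⟩
  rw [funext (collapseCircle_eq_add_inv a)]
  exact (tendsto_const_add_cobounded a).comp (tendsto_inv₀_nhdsNE_zero.comp hlim)

/-- The domain that the disc becomes when the plane is turned inside out by `collapseCircle a`
and `K` is removed. The centre of the disc plays the role of infinity. -/
def invertedCompl (a : ℂ) (K : Set ℂ) : Set ℂ := insert 0 (ball 0 1 ∩ collapseCircle a ⁻¹' Kᶜ)

lemma invertedCompl_diff_zero (a : ℂ) (K : Set ℂ) :
    invertedCompl a K \ {0} = (ball 0 1 \ {0}) ∩ collapseCircle a ⁻¹' Kᶜ := by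
  ext w
  simp only [invertedCompl, Set.mem_sdiff, mem_insert_iff, mem_inter_iff, mem_singleton_iff]
  tauto

lemma mem_closedBall_diff_invertedCompl_iff (ha : a ∈ K) :
    w ∈ closedBall 0 1 \ invertedCompl a K ↔
      w ∈ closedBall 0 1 ∧ w ≠ 0 ∧ collapseCircle a w ∈ K := by
  have hsphere (hw : w ∈ closedBall 0 1) (hball : w ∉ ball 0 1) : collapseCircle a w ∈ K := by
    rwa [collapseCircle_of_mem_sphere (closedBall_sdiff_ball (x := (0 : ℂ)) ▸ ⟨hw, hball⟩)]
  simp only [invertedCompl, Set.mem_sdiff, mem_insert_iff, mem_inter_iff, mem_preimage,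
    mem_compl_iff]
  tauto

lemma isDiffeoOn_collapseCircle_invertedCompl (hK : IsClosed K) (ha : a ∈ K) :
    IsDiffeoOn (collapseCircle a) (fun z => univUnitBall (z - a)⁻¹) (invertedCompl a K \ {0})
      Kᶜ := by
  have hq := isDiffeoOn_collapseCircle a
  have hKa : Kᶜ ⊆ {a}ᶜ := compl_subset_compl.2 (singleton_subset_iff.2 ha)
  rw [invertedCompl_diff_zero]
  exact hq.mono (hq.contDiffOn.continuousOn.isOpen_inter_preimage hq.isOpen_source
    hK.isOpen_compl) hK.isOpen_compl inter_subset_left hKa inter_subset_right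
    fun z hz => ⟨hq.mapsTo_inv (hKa hz), by rwa [mem_preimage, hq.invOn.2 (hKa hz)]⟩

lemma isOpen_invertedCompl (hK : IsCompact K) (ha : a ∈ K) : IsOpen (invertedCompl a K) := by
  refine isOpen_iff_mem_nhds.2 fun w hw => ?_
  rcases eq_or_ne w 0 with rfl | hw0
  · refine insert_mem_nhds_iff.2 (inter_mem (mem_nhdsWithin_of_mem_nhds
      (ball_mem_nhds 0 one_pos)) ((tendsto_collapseCircle_cobounded a).eventually_mem
      hK.isBounded.compl))
  · exact mem_of_superset ((isDiffeoOn_collapseCircle_invertedCompl hK.isClosed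
      ha).isOpen_source.mem_nhds ⟨hw, hw0⟩) sdiff_subset

lemma isPreconnected_invertedCompl (hK : IsCompact K) (hKcompl : IsPreconnected Kᶜ) (ha : a ∈ K) :
    IsPreconnected (invertedCompl a K) := by
  have hq := isDiffeoOn_collapseCircle_invertedCompl hK.isClosed ha
  have himage : (fun z => univUnitBall (z - a)⁻¹) '' Kᶜ = invertedCompl a K \ {0} :=
    hq.symm.invOn.bijOn hq.mapsTo_inv hq.mapsTo |>.image_eq
  have hpre : IsPreconnected (invertedCompl a K \ {0}) :=
    himage ▸ hKcompl.image _ hq.contDiffOn_inv.continuousOn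
  refine hpre.subset_closure sdiff_subset fun w hw => ?_
  rcases eq_or_ne w 0 with rfl | hw0
  · have hnhds := (isOpen_invertedCompl hK ha).mem_nhds hw
    exact mem_closure_iff_nhdsWithin_neBot.2 (by
      rw [sdiff_eq, inter_comm, nhdsWithin_inter_of_mem' (mem_nhdsWithin_of_mem_nhds hnhds)]
      infer_instance)
  · exact subset_closure ⟨hw, hw0⟩

lemma image_closedBall_diff_invertedCompl (ha : a ∈ K) :
    collapseCircle a '' (closedBall 0 1 \ invertedCompl a K) = K := by
  refine subset_antisymm (image_subset_iff.2 fun w hw =>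
    ((mem_closedBall_diff_invertedCompl_iff ha).1 hw).2.2) fun z hz => ?_
  rcases eq_or_ne z a with rfl | hza
  · have hone : collapseCircle z 1 = z := collapseCircle_of_mem_sphere (by simp)
    exact ⟨1, (mem_closedBall_diff_invertedCompl_iff ha).2
      ⟨by simp, one_ne_zero, by rwa [hone]⟩, hone⟩
  · have hq := isDiffeoOn_collapseCircle a
    obtain ⟨hw, hw0⟩ := hq.mapsTo_inv hza
    have hqz := hq.invOn.2 hza
    exact ⟨_, (mem_closedBall_diff_invertedCompl_iff ha).2
      ⟨ball_subset_closedBall hw, hw0, hqz.symm ▸ hz⟩, hqz⟩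

lemma isPreconnected_closedBall_diff_invertedCompl (hK : IsCompact K) (hKconn : IsPreconnected K)
    (ha : a ∈ K) : IsPreconnected (closedBall 0 1 \ invertedCompl a K) := by
  have hq := isDiffeoOn_collapseCircle a
  have hne : ∀ w ∈ closedBall 0 1 \ invertedCompl a K, w ≠ 0 := fun w hw =>
    ((mem_closedBall_diff_invertedCompl_iff ha).1 hw).2.1
  have hball {w : ℂ} (hw : w ∈ closedBall 0 1 \ invertedCompl a K)
      (hwa : collapseCircle a w ≠ a) : w ∈ ball 0 1 \ {0} :=
    ⟨by_contra fun h => hwa (collapseCircle_of_mem_sphere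
      (closedBall_sdiff_ball (x := (0 : ℂ)) ▸ ⟨hw.1, h⟩)), hne w hw⟩
  refine isPreconnected_of_isPreconnected_image
    ((isCompact_closedBall 0 1).diff (isOpen_invertedCompl hK ha))
    ((continuousOn_collapseCircle a).mono hne)
    (by rwa [image_closedBall_diff_invertedCompl ha]) fun z hz => ?_
  rcases eq_or_ne z a with rfl | hza
  · have hfib : closedBall 0 1 \ invertedCompl z K ∩ collapseCircle z ⁻¹' {z} = sphere 0 1 := by
      refine subset_antisymm (fun w hw => closedBall_sdiff_ball (x := (0 : ℂ)) ▸
        ⟨hw.1.1, fun h => hq.mapsTo ⟨h, hne w hw.1⟩ hw.2⟩) fun w hw => ?_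
      have hwz : collapseCircle z w = z := collapseCircle_of_mem_sphere hw
      exact ⟨(mem_closedBall_diff_invertedCompl_iff ha).2 ⟨sphere_subset_closedBall hw,
        ne_zero_of_mem_unit_sphere ⟨w, hw⟩, hwz.symm ▸ ha⟩, hwz⟩
    rw [hfib]
    exact isPreconnected_sphere (by simp [Complex.rank_real_complex]) 0 1
  · refine Subsingleton.isPreconnected ?_
    rintro w ⟨hw, rfl⟩ w' ⟨hw', hww'⟩
    exact hq.invOn.1.injOn (hball hw hza) (hball hw' (hww' ▸ hza)) hww'.symm

lemma isDiscDomain_invertedCompl (hK : IsCompact K) (hKconn : IsPreconnected K)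
    (hKcompl : IsPreconnected Kᶜ) (ha : a ∈ K) : IsDiscDomain (invertedCompl a K) :=
  ⟨isOpen_invertedCompl hK ha, insert_subset (mem_ball_self one_pos) inter_subset_left,
    isPreconnected_invertedCompl hK hKcompl ha,
    isPreconnected_closedBall_diff_invertedCompl hK hKconn ha⟩

lemma exists_isDiffeoOn_compl_singleton_compl (hK : IsCompact K) (hKconn : IsPreconnected K)
    (hKcompl : IsPreconnected Kᶜ) (ha : a ∈ K) :
    ∃ f g, IsDiffeoOn f g {a}ᶜ Kᶜ ∧ f =ᶠ[Bornology.cobounded ℂ] id := by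
  have hU := isDiscDomain_invertedCompl hK hKconn hKcompl ha
  have h0 : (0 : ℂ) ∈ invertedCompl a K := mem_insert _ _
  obtain ⟨φ, ψ, hφ, hψ, hφmaps, hψmaps, hinv⟩ := hU.exists_biholomorphic_ball h0
  have hφψ : IsDiffeoOn φ ψ (ball 0 1) (invertedCompl a K) :=
    ⟨isOpen_ball, hU.isOpen, hφmaps, hψmaps, hinv, (hφ.contDiffOn isOpen_ball).restrict_scalars ℝ,
      (hψ.contDiffOn hU.isOpen).restrict_scalars ℝ⟩
  obtain ⟨Φ, Ψ, hΦ, hid⟩ := hφψ.exists_eventuallyEq_id hU.subset_ball h0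
  have hΦ0 : Φ 0 = 0 := hid.self_of_nhds
  have hΨ0 : Ψ 0 = 0 := by simpa [hΦ0] using hΦ.invOn.1 (mem_ball_self one_pos)
  have hΦ' : IsDiffeoOn Φ Ψ (ball 0 1 \ {0}) (invertedCompl a K \ {0}) :=
    hΦ.mono (isOpen_ball.sdiff isClosed_singleton) (hU.isOpen.sdiff isClosed_singleton)
      sdiff_subset sdiff_subset
      (fun z hz => ⟨hΦ.mapsTo hz.1, fun h => hz.2 (hΦ.invOn.1.injOn hz.1 (mem_ball_self one_pos)
        (h.trans hΦ0.symm))⟩)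
      fun w hw => ⟨hΦ.mapsTo_inv hw.1, fun h => hw.2 (hΦ.invOn.2.injOn hw.1 h0
        (h.trans hΨ0.symm))⟩
  have hq := isDiffeoOn_collapseCircle a
  refine ⟨_, _, (hq.symm.trans hΦ').trans
    (isDiffeoOn_collapseCircle_invertedCompl hK.isClosed ha), ?_⟩
  have hlim : Tendsto (fun z : ℂ => univUnitBall (z - a)⁻¹) (Bornology.cobounded ℂ) (𝓝 0) := by
    have hcont : Tendsto (univUnitBall : ℂ → ℂ) (𝓝 0) (𝓝 0) := by
      simpa using (isDiffeoOn_univUnitBall.contDiffAt (mem_univ (0 : ℂ))).continuousAt.tendsto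
    exact hcont.comp (tendsto_inv₀_cobounded.comp (tendsto_sub_const_cobounded a))
  filter_upwards [hlim.eventually hid, Bornology.isBounded_singleton.compl] with z hz hza
  simp only [Function.comp_apply]
  rw [hz, id, hq.invOn.2 hza, id]

end Collapse

section ComplementaryComponents

section Topology

variable {X : Type*} [TopologicalSpace X] {s K C : Set X} {x p : X}

lemma closure_connectedComponentIn_inter_subset :
    closure (connectedComponentIn s x) ∩ s ⊆ connectedComponentIn s x := by
  by_cases hx : x ∈ s
  · exact (isPreconnected_connectedComponentIn.subset_closure
      (subset_inter subset_closure (connectedComponentIn_subset s x))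
      inter_subset_left).subset_connectedComponentIn
        ⟨subset_closure (mem_connectedComponentIn hx), hx⟩ inter_subset_right
  · simp [connectedComponentIn_eq_empty hx]

lemma isClosed_connectedComponentIn (hs : IsClosed s) : IsClosed (connectedComponentIn s x) :=
  isClosed_of_closure_subset fun _ hy => closure_connectedComponentIn_inter_subset
    ⟨hy, closure_minimal (connectedComponentIn_subset s x) hs hy⟩

lemma closure_connectedComponentIn_compl_subset :
    closure (connectedComponentIn Kᶜ x) ⊆ connectedComponentIn Kᶜ x ∪ K := fun _ hy =>
  or_iff_not_imp_right.2 fun hyK => closure_connectedComponentIn_inter_subset ⟨hy, hyK⟩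

lemma subset_connectedComponentIn_or_subset_compl (hC : IsPreconnected C) (hCs : C ⊆ s) :
    C ⊆ connectedComponentIn s p ∨ C ⊆ (connectedComponentIn s p)ᶜ := by
  by_cases h : ∃ q ∈ C, q ∈ connectedComponentIn s p
  · obtain ⟨q, hqC, hq⟩ := h
    exact .inl (connectedComponentIn_eq hq ▸ hC.subset_connectedComponentIn hqC hCs)
  · exact .inr fun q hqC hq => h ⟨q, hqC, hq⟩

lemma isPreconnected_compl_connectedComponentIn_compl [PreconnectedSpace X]
    [LocallyConnectedSpace X] (hK : IsClosed K) (hKconn : IsPreconnected K) (hKne : K.Nonempty) :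
    IsPreconnected (connectedComponentIn Kᶜ p)ᶜ := by
  have hKW : K ⊆ (connectedComponentIn Kᶜ p)ᶜ :=
    subset_compl_comm.1 (connectedComponentIn_subset Kᶜ p)
  obtain ⟨k, hk⟩ := hKne
  refine isPreconnected_of_forall k fun x hx => ?_
  by_cases hxK : x ∈ K
  · exact ⟨K, hKW, hk, hxK, hKconn⟩
  set C := connectedComponentIn Kᶜ x
  have hxC : x ∈ C := mem_connectedComponentIn hxK
  have hC : IsPreconnected C := isPreconnected_connectedComponentIn
  have hCo : IsOpen C := hK.isOpen_compl.connectedComponentIn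
  obtain ⟨y, hyC, hyK⟩ : ∃ y ∈ closure C, y ∈ K := by
    by_contra! h
    have hCc : IsClosed C := isClosed_of_closure_subset fun y hy =>
      (closure_connectedComponentIn_compl_subset hy).resolve_right (h y hy)
    have : k ∈ C := IsClopen.eq_univ ⟨hCc, hCo⟩ ⟨x, hxC⟩ ▸ mem_univ k
    exact connectedComponentIn_subset _ _ this hk
  have hCW : C ⊆ (connectedComponentIn Kᶜ p)ᶜ :=
    (subset_connectedComponentIn_or_subset_compl hC (connectedComponentIn_subset _ _)).resolve_left
      fun h => hx (h hxC)
  exact ⟨closure C ∪ K, union_subset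
    (closure_connectedComponentIn_compl_subset.trans (union_subset hCW hKW)) hKW, .inr hk,
    .inl (subset_closure hxC), hC.closure.union y hyC hyK hKconn⟩

end Topology

section NormedSpace

variable {E : Type*} [NormedAddCommGroup E] [NormedSpace ℝ E] {K : Set E}

lemma isPreconnected_compl_closedBall_zero (hE : 1 < Module.rank ℝ E) {R : ℝ} (hR : 0 ≤ R) :
    IsPreconnected (closedBall (0 : E) R)ᶜ := by
  have himage : (closedBall (0 : E) R)ᶜ = (fun p : ℝ × E => p.1 • p.2) '' Ioi R ×ˢ sphere 0 1 := by
    refine subset_antisymm (fun x hx => ?_) ?_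
    · have hx : R < ‖x‖ := by simpa using hx
      have hx0 : ‖x‖ ≠ 0 := (hR.trans_lt hx).ne'
      exact ⟨(‖x‖, ‖x‖⁻¹ • x), ⟨hx, by simp [norm_smul, hx0]⟩, by simp [smul_smul, hx0]⟩
    · rintro _ ⟨⟨t, v⟩, ⟨ht : R < t, hv⟩, rfl⟩
      have hv : ‖v‖ = 1 := by simpa using hv
      simpa [norm_smul, hv, abs_of_pos (hR.trans_lt ht)] using ht
  rw [himage]
  exact (isPreconnected_Ioi.prod (isPreconnected_sphere hE 0 1)).image _ (by fun_prop)

lemma exists_isCompact_compl_connectedComponentIn_compl [ProperSpace E]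
    (hE : 1 < Module.rank ℝ E) (hK : IsCompact K) :
    ∃ p, IsCompact (connectedComponentIn Kᶜ p)ᶜ := by
  obtain ⟨R, hR, hKR⟩ := hK.isBounded.subset_closedBall_lt 0 0
  have : Nontrivial E := rank_pos_iff_nontrivial.1 (one_pos.trans hE)
  obtain ⟨p, hp⟩ : ∃ p, p ∈ (closedBall (0 : E) R)ᶜ :=
    (NormedSpace.exists_lt_norm ℝ E R).imp fun p hp => by simpa using hp
  refine ⟨p, (isCompact_closedBall 0 R).of_isClosed_subset
    hK.isClosed.isOpen_compl.connectedComponentIn.isClosed_compl (compl_subset_comm.1 ?_)⟩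
  exact (isPreconnected_compl_closedBall_zero hE hR.le).subset_connectedComponentIn hp
    (compl_subset_compl.2 hKR)

end NormedSpace

end ComplementaryComponents

section CriticalCovers

lemma IsDiffeoOn.tendsto_nhdsSet {E : Type*} [NormedAddCommGroup E] [NormedSpace ℝ E]
    [ProperSpace E] {f g : E → E} {a : E} {W K : Set E} (h : IsDiffeoOn f g {a}ᶜ W)
    (hid : f =ᶠ[Bornology.cobounded E] id) (hW : closure W ⊆ W ∪ K) :
    Tendsto f (𝓝[≠] a) (𝓝ˢ K) := by
  refine (hasBasis_nhdsSet K).tendsto_right_iff.2 fun V ⟨hV, hKV⟩ => ?_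
  obtain ⟨R, -, hR⟩ := (hasBasis_cobounded_compl_closedBall (0 : E)).eventually_iff.1
    (hid.and (isBounded_closedBall (x := a) (r := 1)).compl)
  set T := closedBall 0 R ∩ (closure W \ V)
  have hTW : T ⊆ W := fun y hy => (hW hy.2.1).resolve_right fun hyK => hy.2.2 (hKV hyK)
  have hT : IsCompact (g '' T) :=
    ((isCompact_closedBall 0 R).inter_right (isClosed_closure.sdiff hV)).image_of_continuousOn
      (h.contDiffOn_inv.continuousOn.mono hTW)
  have haT : a ∉ g '' T := by
    rintro ⟨y, hy, hya⟩
    exact h.mapsTo_inv (hTW hy) hya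
  filter_upwards [self_mem_nhdsWithin,
    mem_nhdsWithin_of_mem_nhds (hT.isClosed.isOpen_compl.mem_nhds haT),
    mem_nhdsWithin_of_mem_nhds (closedBall_mem_nhds a one_pos)] with x hxa hxT hx
  by_contra hxV
  have hfx : f x ∈ closedBall 0 R := by
    by_contra hfx
    obtain ⟨hffx, hfxa⟩ := hR hfx
    have hne : f x ≠ a := fun h => hfxa (h ▸ mem_closedBall_self zero_le_one)
    exact hfxa (by rwa [h.invOn.1.injOn hne hxa hffx])
  exact hxT ⟨f x, ⟨hfx, subset_closure (h.mapsTo hxa), hxV⟩, h.invOn.1 hxa⟩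

variable {F : ℂ → ℝ} {f g : ℂ → ℂ} {K Q W : Set ℂ} {a : ℂ} {c : ℝ}

lemma exists_contDiff_of_collapse (h : IsDiffeoOn f g {a}ᶜ W)
    (hid : f =ᶠ[Bornology.cobounded ℂ] id) (hW : closure W ⊆ W ∪ K) (hF : ContDiff ℝ ∞ F)
    (hFK : ∀ y ∈ K, F y = c) (hQ : IsCompact Q) (hQW : Q ⊆ W)
    (hcrit : ∀ y ∈ W, fderiv ℝ F y = 0 → y ∈ Q) :
    ∃ G : ℂ → ℝ, ContDiff ℝ ∞ G ∧ G =ᶠ[Bornology.cobounded ℂ] F ∧ (∀ y ∈ Q, G (g y) = F y) ∧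
      ∀ x ≠ a, fderiv ℝ G x = 0 → f x ∈ Q := by
  set u : ℂ → ℝ := Function.update (F ∘ f) a c
  have hu_eq {x : ℂ} (hx : x ≠ a) : u =ᶠ[𝓝 x] F ∘ f :=
    (eventually_ne_nhds hx).mono fun y hy => Function.update_of_ne hy _ _
  have hu_crit {x : ℂ} (hx : x ≠ a) (hux : fderiv ℝ u x = 0) : f x ∈ Q := by
    rw [(hu_eq hx).fderiv_eq, h.fderiv_comp_eq_zero_iff hx (hF.differentiable (by simp) _)] at hux
    exact hcrit _ (h.mapsTo hx) hux
  have hgQ : IsCompact (g '' Q) := hQ.image_of_continuousOn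
    (h.contDiffOn_inv.continuousOn.mono hQW)
  have haQ : a ∉ g '' Q := by
    rintro ⟨y, hy, hya⟩
    exact h.mapsTo_inv (hQW hy) hya
  obtain ⟨r, hr, hball⟩ := Metric.mem_nhds_iff.1 (hgQ.isClosed.isOpen_compl.mem_nhds haQ)
  have hu_ball : ∀ x ∈ ball a r \ {a}, fderiv ℝ u x ≠ 0 := fun x hx hux =>
    hball hx.1 ⟨f x, hu_crit hx.2 hux, h.invOn.1 hx.2⟩
  have hu_cont : ContinuousAt u a := by
    have hFc : Tendsto F (𝓝ˢ K) (𝓝 c) := by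
      refine tendsto_iff_forall_eventually_mem.2 fun V hV => eventually_nhdsSet_iff_forall.2 ?_
      exact fun y hy => hF.continuous.continuousAt (hFK y hy ▸ hV)
    simpa [u, continuousAt_update_same] using hFc.comp (h.tendsto_nhdsSet hid hW)
  have hu_smooth : ContDiffOn ℝ ∞ u {a}ᶜ := fun x hx =>
    ((hF.contDiffAt.comp x (h.contDiffAt hx)).congr_of_eventuallyEq (hu_eq hx)).contDiffWithinAt
  obtain ⟨G, hG, hGu, hG_ball⟩ :=
    exists_contDiff_eventuallyEq_fderiv_ne_zero hr hu_smooth hu_cont hu_ball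
  refine ⟨G, hG, ?_, fun y hy => ?_, fun x hxa hGx => ?_⟩
  · filter_upwards [hid, isBounded_ball.compl, Bornology.isBounded_singleton.compl]
      with x hx hxr hxa
    rw [(hGu x hxr).self_of_nhds, (hu_eq hxa).self_of_nhds, Function.comp_apply, hx, id]
  · rw [(hGu _ fun hgy => hball hgy (mem_image_of_mem g hy)).self_of_nhds,
      (hu_eq (h.mapsTo_inv (hQW hy))).self_of_nhds, Function.comp_apply, h.invOn.2 (hQW hy)]
  · have hxr : x ∉ ball a r := fun hxr => hG_ball x ⟨hxr, hxa⟩ hGx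
    exact hu_crit hxa (by rwa [← (hGu x hxr).fderiv_eq])

lemma exists_isDiffeoOn_connectedComponentIn_compl (hK : IsCompact K) (hKconn : IsPreconnected K)
    (ha : a ∈ K) :
    ∃ p f g, IsDiffeoOn f g {a}ᶜ (connectedComponentIn Kᶜ p) ∧
      f =ᶠ[Bornology.cobounded ℂ] id := by
  obtain ⟨p, hp⟩ := exists_isCompact_compl_connectedComponentIn_compl
    (by simp [Complex.rank_real_complex]) hK
  obtain ⟨f, g, hfg, hid⟩ := exists_isDiffeoOn_compl_singleton_compl hp
    (isPreconnected_compl_connectedComponentIn_compl hK.isClosed hKconn ⟨a, ha⟩)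
    (by rw [compl_compl]; exact isPreconnected_connectedComponentIn)
    fun haW => connectedComponentIn_subset _ _ haW ha
  exact ⟨p, f, g, compl_compl (connectedComponentIn Kᶜ p) ▸ hfg, hid⟩

/-- A family of pairwise disjoint compact preconnected sets, some of which may be empty. -/
structure IsContinuumFamily {X ι : Type*} [TopologicalSpace X] (C : ι → Set X) : Prop where
  isCompact (i : ι) : IsCompact (C i)
  isPreconnected (i : ι) : IsPreconnected (C i)
  pairwise_disjoint : Pairwise (Function.onFun Disjoint C)

namespace IsContinuumFamily

variable {X Y ι : Type*} [TopologicalSpace X] [TopologicalSpace Y] {C : ι → Set X}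

lemma inter_connectedComponentIn (h : IsContinuumFamily C) (i₀ : ι) (p : X) :
    IsContinuumFamily fun i => C i ∩ connectedComponentIn (C i₀)ᶜ p := by
  have hor (i : ι) : C i ∩ connectedComponentIn (C i₀)ᶜ p = C i ∨
      C i ∩ connectedComponentIn (C i₀)ᶜ p = ∅ := by
    rw [inter_eq_left, ← disjoint_iff_inter_eq_empty, ← subset_compl_iff_disjoint_right]
    rcases eq_or_ne i i₀ with rfl | hi
    · exact .inr (subset_compl_comm.1 (connectedComponentIn_subset _ _))
    · exact subset_connectedComponentIn_or_subset_compl (h.isPreconnected i)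
        (h.pairwise_disjoint hi).subset_compl_right
  refine ⟨fun i => ?_, fun i => ?_, fun i j hij =>
    (h.pairwise_disjoint hij).mono inter_subset_left inter_subset_left⟩
  · rcases hor i with hi | hi <;> simp [hi, h.isCompact i]
  · rcases hor i with hi | hi <;> simp [hi, h.isPreconnected i, isPreconnected_empty]

lemma image (h : IsContinuumFamily C) {g : X → Y} {W : Set X} (hg : ContinuousOn g W)
    (hinj : InjOn g W) (hCW : ∀ i, C i ⊆ W) : IsContinuumFamily fun i => g '' C i :=
  ⟨fun i => (h.isCompact i).image_of_continuousOn (hg.mono (hCW i)),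
    fun i => (h.isPreconnected i).image g (hg.mono (hCW i)),
    fun i j hij => (h.pairwise_disjoint hij).image hinj (hCW i) (hCW j)⟩

lemma update_singleton [DecidableEq ι] (h : IsContinuumFamily C) {i₀ : ι} {a : X}
    (ha : ∀ i, a ∉ C i) : IsContinuumFamily (Function.update C i₀ {a}) := by
  refine ⟨fun i => ?_, fun i => ?_, fun i j hij => ?_⟩
  · rcases eq_or_ne i i₀ with rfl | hi <;> simp [*, h.isCompact]
  · rcases eq_or_ne i i₀ with rfl | hi <;> simp [*, h.isPreconnected, isPreconnected_singleton]
  · rcases eq_or_ne i i₀ with rfl | hi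
    · simp [Function.onFun, hij.symm, ha]
    rcases eq_or_ne j i₀ with rfl | hj
    · simp [Function.onFun, hi, ha]
    · simpa [Function.onFun, hi, hj] using h.pairwise_disjoint hij

end IsContinuumFamily

/-- A family of disjoint continua that contain all critical points of the smooth function `F`, and
on each of which `F` is constant. -/
structure IsCriticalCover {ι : Type*} (F : ℂ → ℝ) (C : ι → Set ℂ) : Prop
    extends IsContinuumFamily C where
  contDiff : ContDiff ℝ ∞ F
  eq_of_mem {i : ι} {x y : ℂ} : x ∈ C i → y ∈ C i → F x = F y
  exists_mem {x : ℂ} : fderiv ℝ F x = 0 → ∃ i, x ∈ C i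

namespace IsCriticalCover

variable {ι : Type*} [Finite ι] {C : ι → Set ℂ}

lemma exists_collapse (h : IsCriticalCover F C) {i₀ : ι} (hi₀ : (C i₀).Nonempty) :
    ∃ G C', IsCriticalCover G C' ∧ G =ᶠ[Bornology.cobounded ℂ] F ∧ (C' i₀).Subsingleton ∧
      ∀ i, (C i).Subsingleton → (C' i).Subsingleton := by
  classical
  obtain ⟨a, ha⟩ := hi₀
  obtain ⟨p, f, g, hfg, hid⟩ := exists_isDiffeoOn_connectedComponentIn_compl (h.isCompact i₀)
    (h.isPreconnected i₀) ha
  set W := connectedComponentIn (C i₀)ᶜ p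
  have hD : IsContinuumFamily fun i => C i ∩ W := h.inter_connectedComponentIn i₀ p
  obtain ⟨G, hG, hGF, hGg, hGcrit⟩ := exists_contDiff_of_collapse (Q := ⋃ i, C i ∩ W) hfg hid
    closure_connectedComponentIn_compl_subset h.contDiff (fun y hy => h.eq_of_mem hy ha)
    (isCompact_iUnion hD.isCompact) (iUnion_subset fun _ => inter_subset_right)
    fun y hy hFy => mem_iUnion.2 ((h.exists_mem hFy).imp fun _ hi => ⟨hi, hy⟩)
  set C' : ι → Set ℂ := Function.update (fun i => g '' (C i ∩ W)) i₀ {a}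
  have hC'₀ : C' i₀ = {a} := Function.update_self _ _ _
  have hC' {i : ι} (hi : i ≠ i₀) : C' i = g '' (C i ∩ W) := Function.update_of_ne hi _ _
  refine ⟨G, C', ⟨?_, hG, fun {i x y} hx hy => ?_, fun {x} hx => ?_⟩, hGF,
    hC'₀ ▸ subsingleton_singleton, fun i hi => ?_⟩
  · refine (hD.image hfg.contDiffOn_inv.continuousOn hfg.invOn.2.injOn
      fun _ => inter_subset_right).update_singleton fun i => ?_
    rintro ⟨y, hy, hya⟩
    exact hfg.mapsTo_inv hy.2 hya
  · rcases eq_or_ne i i₀ with rfl | hi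
    · rw [hC'₀] at hx hy
      rw [hx, hy]
    · rw [hC' hi] at hx hy
      obtain ⟨⟨x, hx, rfl⟩, y, hy, rfl⟩ := hx, hy
      rw [hGg x (mem_iUnion_of_mem i hx), hGg y (mem_iUnion_of_mem i hy), h.eq_of_mem hx.1 hy.1]
  · rcases eq_or_ne x a with rfl | hxa
    · exact ⟨i₀, hC'₀ ▸ mem_singleton x⟩
    · obtain ⟨i, hi⟩ := mem_iUnion.1 (hGcrit x hxa hx)
      have hi₀ : i ≠ i₀ := fun h => connectedComponentIn_subset _ _ hi.2 (h ▸ hi.1)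
      exact ⟨i, hC' hi₀ ▸ ⟨f x, hi, hfg.invOn.1 hxa⟩⟩
  · rcases eq_or_ne i i₀ with rfl | hi₀
    · exact hC'₀ ▸ subsingleton_singleton
    · exact hC' hi₀ ▸ (hi.anti inter_subset_left).image g

lemma exists_subsingleton (h : IsCriticalCover F C) :
    ∃ G C', IsCriticalCover G C' ∧ G =ᶠ[Bornology.cobounded ℂ] F ∧
      ∀ i : ι, (C' i).Subsingleton := by
  induction hN : {i | ¬(C i).Subsingleton} using WellFoundedLT.induction generalizing F C with
  | _ N ih
  by_cases hall : ∀ i, (C i).Subsingleton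
  · exact ⟨F, C, h, .rfl, hall⟩
  obtain ⟨i₀, hi₀⟩ := not_forall.1 hall
  obtain ⟨G, C', hG, hGF, hsub, hmono⟩ := h.exists_collapse (not_subsingleton_iff.1 hi₀).nonempty
  have hlt : {i | ¬(C' i).Subsingleton} < N :=
    hN ▸ (ssubset_iff_of_subset fun i => mt (hmono i)).2 ⟨i₀, hi₀, not_not.2 hsub⟩
  obtain ⟨G', C'', h', hG', hsub'⟩ := ih _ hlt hG rfl
  exact ⟨G', C'', h', hG'.trans hGF, hsub'⟩

lemma exists_encard_le (h : IsCriticalCover F C) :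
    ∃ G, ContDiff ℝ ∞ G ∧ G =ᶠ[Bornology.cobounded ℂ] F ∧
      {x | fderiv ℝ G x = 0}.encard ≤ ENat.card ι := by
  obtain ⟨G, C', hG, hGF, hsub⟩ := h.exists_subsingleton
  refine ⟨G, hG.contDiff, hGF, ?_⟩
  choose i hi using fun x : {x | fderiv ℝ G x = 0} => hG.exists_mem x.2
  refine ENat.card_le_card_of_injective (f := i) fun x y hxy => Subtype.ext ?_
  exact hsub _ (hi x) (hxy ▸ hi y)

end IsCriticalCover

end CriticalCovers

section Transport

lemma isContinuumFamily_connectedComponentIn {X : Type*} [TopologicalSpace X] [T2Space X]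
    {s : Set X} (hs : IsCompact s) :
    IsContinuumFamily ((↑) : {C | ∃ x ∈ s, C = connectedComponentIn s x} → Set X) := by
  refine ⟨?_, ?_, ?_⟩
  · rintro ⟨_, x, -, rfl⟩
    exact hs.of_isClosed_subset (isClosed_connectedComponentIn hs.isClosed)
      (connectedComponentIn_subset s x)
  · rintro ⟨_, x, -, rfl⟩
    exact isPreconnected_connectedComponentIn
  · rintro ⟨_, x, _, rfl⟩ ⟨_, y, _, rfl⟩ hxy
    refine disjoint_left.2 fun z (hzx : z ∈ connectedComponentIn s x) hzy => hxy (Subtype.ext ?_)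
    exact (connectedComponentIn_eq hzx).trans (connectedComponentIn_eq hzy).symm

variable {E F : Type*} [NormedAddCommGroup E] [NormedSpace ℝ E] [NormedAddCommGroup F]
  [NormedSpace ℝ F]

lemma IsDiffeoOn.exists_contDiff_glue [ProperSpace E] {Φ : E → F} {Ψ : F → E} {V : Set F}
    (hΦ : IsDiffeoOn Φ Ψ univ V) {f : F → ℝ} (hf : ContDiff ℝ ∞ f) {G : E → ℝ}
    (hG : ContDiff ℝ ∞ G) (hGf : G =ᶠ[Bornology.cobounded E] f ∘ Φ) :
    ∃ f' : F → ℝ, ContDiff ℝ ∞ f' ∧ (∀ x ∉ V, f' =ᶠ[𝓝 x] f) ∧ ∀ x ∈ V, f' =ᶠ[𝓝 x] G ∘ Ψ := by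
  classical
  obtain ⟨R, -, hR⟩ := (hasBasis_cobounded_compl_closedBall (0 : E)).eventually_iff.1 hGf
  have hK : IsCompact (Φ '' closedBall 0 R) :=
    (isCompact_closedBall 0 R).image_of_continuousOn
      (hΦ.contDiffOn.continuousOn.mono (subset_univ _))
  have hin (x) (hx : x ∈ V) : V.piecewise (G ∘ Ψ) f =ᶠ[𝓝 x] G ∘ Ψ :=
    (V.piecewise_eqOn _ _).eventuallyEq_of_mem (hΦ.isOpen_target.mem_nhds hx)
  have hout (x) (hx : x ∉ V) : V.piecewise (G ∘ Ψ) f =ᶠ[𝓝 x] f := by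
    have hxK : x ∉ Φ '' closedBall 0 R := fun ⟨y, _, hy⟩ => hx (hy ▸ hΦ.mapsTo (mem_univ y))
    filter_upwards [hK.isClosed.isOpen_compl.mem_nhds hxK] with y hy
    by_cases hyV : y ∈ V
    · have hΨy : Ψ y ∉ closedBall 0 R := fun h => hy ⟨Ψ y, h, hΦ.invOn.2 hyV⟩
      rw [piecewise_eq_of_mem _ _ _ hyV, Function.comp_apply, hR hΨy, Function.comp_apply,
        hΦ.invOn.2 hyV]
    · exact piecewise_eq_of_notMem _ _ _ hyV
  refine ⟨V.piecewise (G ∘ Ψ) f, contDiff_iff_contDiffAt.2 fun x => ?_, hout, hin⟩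
  by_cases hx : x ∈ V
  · exact (hG.contDiffAt.comp x (hΦ.symm.contDiffAt hx)).congr_of_eventuallyEq (hin x hx)
  · exact hf.contDiffAt.congr_of_eventuallyEq (hout x hx)

section Pullback

variable {Φ : ℂ → E} {Ψ : E → ℂ} {V K : Set E} {f : E → ℝ}

lemma IsDiffeoOn.isCriticalCover_image_connectedComponentIn (hΦ : IsDiffeoOn Φ Ψ univ V)
    (hf : ContDiff ℝ ∞ f) (hKV : ∀ x, x ∈ K ↔ x ∈ V ∧ fderiv ℝ f x = 0) (hK : IsCompact K) :
    IsCriticalCover (f ∘ Φ)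
      fun C : {C | ∃ x ∈ K, C = connectedComponentIn K x} => Ψ '' C := by
  have hFΦ : ContDiff ℝ ∞ (f ∘ Φ) := hf.comp (contDiffOn_univ.1 hΦ.contDiffOn)
  have hcrit (z : ℂ) : fderiv ℝ (f ∘ Φ) z = 0 ↔ Φ z ∈ K := by
    rw [hΦ.fderiv_comp_eq_zero_iff (mem_univ z) (hf.differentiable (by simp) _), hKV,
      and_iff_right (hΦ.mapsTo (mem_univ z))]
  have hCK (C : {C | ∃ x ∈ K, C = connectedComponentIn K x}) : (C : Set E) ⊆ K := by
    obtain ⟨_, x, -, rfl⟩ := C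
    exact connectedComponentIn_subset K x
  have hΦΨ {x : E} (hx : x ∈ K) : Φ (Ψ x) = x := hΦ.invOn.2 ((hKV x).1 hx).1
  have hfam := (isContinuumFamily_connectedComponentIn hK).image
    hΦ.contDiffOn_inv.continuousOn hΦ.invOn.2.injOn fun C x hx => ((hKV x).1 (hCK C hx)).1
  refine ⟨hfam, hFΦ, fun {C} {_ _} hx hy => ?_, fun {z} hz => ?_⟩
  · refine eq_of_isPreconnected_of_fderiv_eq_zero Complex.finrank_real_complex.le
      (contDiff_infty.1 hFΦ 3) (hfam.isPreconnected C) ?_ hx hy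
    rintro _ ⟨x, hx, rfl⟩
    exact (hcrit _).2 ((hΦΨ (hCK C hx)).symm ▸ hCK C hx)
  · exact ⟨⟨_, Φ z, (hcrit z).1 hz, rfl⟩, Φ z, mem_connectedComponentIn ((hcrit z).1 hz),
      hΦ.invOn.1 (mem_univ z)⟩

lemma IsDiffeoOn.exists_encard_critical_le (hΦ : IsDiffeoOn Φ Ψ univ V) (hf : ContDiff ℝ ∞ f)
    (hKV : ∀ x, x ∈ K ↔ x ∈ V ∧ fderiv ℝ f x = 0) (hK : IsCompact K)
    (hfin : {C | ∃ x ∈ K, C = connectedComponentIn K x}.Finite) :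
    ∃ f' : E → ℝ, ContDiff ℝ ∞ f' ∧ (∀ x ∉ V, f' =ᶠ[𝓝 x] f) ∧
      {x ∈ V | fderiv ℝ f' x = 0}.encard ≤
        {C | ∃ x ∈ K, C = connectedComponentIn K x}.encard := by
  have : Finite {C | ∃ x ∈ K, C = connectedComponentIn K x} := hfin
  obtain ⟨G, hG, hGF, hcard⟩ :=
    (hΦ.isCriticalCover_image_connectedComponentIn hf hKV hK).exists_encard_le
  obtain ⟨f', hf', hout, hin⟩ := hΦ.exists_contDiff_glue hf hG hGF
  refine ⟨f', hf', hout, (encard_le_encard_of_injOn (f := Ψ) (fun x hx => ?_)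
    (hΦ.invOn.2.injOn.mono fun x hx => hx.1)).trans hcard⟩
  have hcritG : fderiv ℝ (G ∘ Ψ) x = 0 := (hin x hx.1).fderiv_eq.symm.trans hx.2
  rwa [hΦ.symm.fderiv_comp_eq_zero_iff hx.1 (hG.contDiffAt.differentiableAt (by simp))] at hcritG

end Pullback

end Transport

section Ribbons

open OpenPartialHomeomorph (univUnitBall)

variable {n : ℕ} {a : Ribbon n} {f f' : E2 → ℝ}

lemma norm_sphPt (t : ℝ) : ‖sphPt t‖ = 1 := by
  simp [sphPt, EuclideanSpace.norm_eq, Fin.sum_univ_two]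

lemma IsExtension.gammaR_le_encard_critPts (hf : IsExtension a f) :
    gammaR a ≤ (critPts f).encard :=
  sInf_le ⟨f, hf, rfl⟩

lemma IsExtension.congr (hf : IsExtension a f) (hf' : ContDiff ℝ (⊤ : ℕ∞) f')
    (hff' : ∀ x ∈ sphere 0 1, f' =ᶠ[𝓝 x] f) : IsExtension a f' := by
  have hsph (t : ℝ) : f' =ᶠ[𝓝 (sphPt t)] f := hff' _ (by simp [norm_sphPt])
  refine ⟨hf', fun t => (hsph t).eq_of_nhds.trans (hf.2.1 t),
    fun x hx => (hff' x hx).fderiv_eq.trans_ne (hf.2.2.1 x hx), fun i => ?_⟩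
  rw [(hsph (a.θ i)).gradient_eq]
  exact hf.2.2.2 i

lemma IsExtension.isCompact_critPts (hf : IsExtension a f) : IsCompact (critPts f) := by
  have hcrit : critPts f = closedBall 0 1 ∩ {x | fderiv ℝ f x = 0} := by
    refine subset_antisymm (inter_subset_inter_left _ ball_subset_closedBall) fun x hx => ⟨?_, hx.2⟩
    by_contra hxb
    have hxs : x ∈ closedBall 0 1 \ ball 0 1 := ⟨hx.1, hxb⟩
    exact hf.2.2.1 x (closedBall_sdiff_ball (x := (0 : E2)) ▸ hxs) hx.2
  rw [hcrit]
  exact (isCompact_closedBall 0 1).inter_right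
    (isClosed_eq (hf.1.continuous_fderiv (by simp)) continuous_const)

lemma isDiffeoOn_complex_unit_ball :
    IsDiffeoOn (univUnitBall ∘ Complex.orthonormalBasisOneI.repr.toContinuousLinearEquiv)
      (Complex.orthonormalBasisOneI.repr.toContinuousLinearEquiv.symm ∘ univUnitBall.symm) univ
      (ball (0 : E2) 1) :=
  (isDiffeoOn_continuousLinearEquiv _).trans isDiffeoOn_univUnitBall

end Ribbons

/-- For any extension `f` of a ribbon `a`, the set of connected components of the critical set
of `f` in the open unit disk has cardinality at least `γ(a)`. -/
theorem stmt_12 (n : ℕ) (a : Ribbon n) (f : E2 → ℝ) (hf : IsExtension a f) :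
    gammaR a ≤
      {C : Set E2 | ∃ x ∈ critPts f, C = connectedComponentIn (critPts f) x}.encard := by
  by_cases hfin : {C | ∃ x ∈ critPts f, C = connectedComponentIn (critPts f) x}.Finite
  · obtain ⟨f', hf', hff', hcard⟩ := isDiffeoOn_complex_unit_ball.exists_encard_critical_le hf.1
      (fun _ => Iff.rfl) hf.isCompact_critPts hfin
    have hext : IsExtension a f' := hf.congr hf' fun x hx => hff' x fun hxb =>
      (mem_ball.1 hxb).ne (mem_sphere.1 hx)
    exact hext.gammaR_le_encard_critPts.trans hcard
  · exact (Set.Infinite.encard_eq hfin).symm ▸ le_top
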